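/- Let Ω ⊆ ℂⁿ be a convex domain and τ a holomorphic automorphism of Ω. Then there exists a universal function for τ, i.e. a holomorphic function F : Ω → ℂ such that {F ∘ τʲ : j ≥ 1} is dense in 𝒪(Ω) with respect to the compact-open topology, if and only if τ is a generalized translation, i.e. for every compact 𝒪(Ω)-convex set K ⊆ Ω there exists j ≥ 1 such that τʲ(K) ∩ K = ∅ and τʲ(K) ∪ K is 𝒪(Ω)-convex. -/

import Mathlib

open scoped Manifold Topology
open Set Metric Filter

noncomputable section

/-- The complex Euclidean space `ℂⁿ`. -/
abbrev CSpace (n : ℕ) : Type := EuclideanSpace ℂ (Fin n)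

/-- The space `𝒪(Ω)` of holomorphic functions `Ω → ℂ`, as a subset of `C(Ω, ℂ)` with the
compact-open topology. -/
def OFun {n : ℕ} (Ω : Set (CSpace n)) : Set C(↥Ω, ℂ) :=
  {f | ∃ g : CSpace n → ℂ, DifferentiableOn ℂ g Ω ∧ ∀ x : ↥Ω, f x = g ↑x}

/-- The `𝒪(Ω)`-convex hull of a set `K ⊆ Ω`. -/
def OHull {n : ℕ} (Ω K : Set (CSpace n)) : Set (CSpace n) :=
  {x ∈ Ω | ∀ f : CSpace n → ℂ, DifferentiableOn ℂ f Ω → ‖f x‖ ≤ ⨆ y : K, ‖f ↑y‖}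

/-- `τ` is a generalized translation of `Ω`: for every compact `𝒪(Ω)`-convex `K ⊆ Ω` there is
`j ≥ 1` with `τʲ(K) ∩ K = ∅` and `τʲ(K) ∪ K` again `𝒪(Ω)`-convex. -/
def IsGenTranslation {n : ℕ} (Ω : Set (CSpace n)) (τ : CSpace n → CSpace n) : Prop :=
  ∀ K : Set (CSpace n), IsCompact K → K ⊆ Ω → OHull Ω K = K →
    ∃ j : ℕ, 1 ≤ j ∧ (τ^[j] '' K) ∩ K = ∅ ∧
      OHull Ω ((τ^[j] '' K) ∪ K) = (τ^[j] '' K) ∪ K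

section RectangleSplitting

open Complex MeasureTheory

variable {E : Type*} [NormedAddCommGroup E] [NormedSpace ℂ E]

lemma differentiableOn_integral_cauchy_kernel {γ : ℝ → ℂ} (hγ : Continuous γ) {g : ℝ → E} {p q : ℝ}
    (hg : ContinuousOn g (uIcc p q)) {U : Set ℂ} (hU : ∀ z ∈ U, ∀ x ∈ uIcc p q, γ x ≠ z) :
    DifferentiableOn ℂ (fun z => ∫ x in p..q, (γ x - z)⁻¹ • g x) U := by
  intro z₀ hz₀
  have hcomp : IsCompact (γ '' uIcc p q) := isCompact_uIcc.image hγ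
  have hz₀' : z₀ ∈ (γ '' uIcc p q)ᶜ := by
    rintro ⟨x, hx, hxz⟩
    exact hU z₀ hz₀ x hx hxz
  obtain ⟨δ, hδ, hball⟩ := Metric.isOpen_iff.1 hcomp.isClosed.isOpen_compl z₀ hz₀'
  have hfar : ∀ x ∈ uIcc p q, ∀ z ∈ ball z₀ (δ / 2), δ / 2 ≤ ‖γ x - z‖ := by
    intro x hx z hz
    have h1 : δ ≤ dist (γ x) z₀ := by
      by_contra! h
      exact hball (mem_ball.2 h) ⟨x, hx, rfl⟩
    have h2 := dist_triangle (γ x) z z₀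
    rw [mem_ball] at hz
    rw [← dist_eq_norm]
    linarith
  have hne : ∀ x ∈ uIcc p q, ∀ z ∈ ball z₀ (δ / 2), γ x - z ≠ 0 := by
    intro x hx z hz h
    have := hfar x hx z hz
    rw [h, norm_zero] at this
    linarith
  have hcont : ∀ z ∈ ball z₀ (δ / 2), ContinuousOn (fun x => (γ x - z)⁻¹) (uIcc p q) :=
    fun z hz => (hγ.continuousOn.sub continuousOn_const).inv₀ fun x hx => hne x hx z hz
  have hmem : z₀ ∈ ball z₀ (δ / 2) := mem_ball_self (half_pos hδ)
  have hnhds : ball z₀ (δ / 2) ∈ 𝓝 z₀ := ball_mem_nhds _ (half_pos hδ)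
  refine (intervalIntegral.hasDerivAt_integral_of_dominated_loc_of_deriv_le (𝕜 := ℂ)
    (F' := fun z x => ((γ x - z)⁻¹ ^ 2) • g x)
    (bound := fun x => (δ / 2)⁻¹ ^ 2 * ‖g x‖) hnhds ?_ ?_ ?_ ?_ ?_ ?_).2.differentiableAt
      |>.differentiableWithinAt
  · filter_upwards [hnhds] with z hz
    exact (((hcont z hz).smul hg).mono uIoc_subset_uIcc).aestronglyMeasurable measurableSet_uIoc
  · exact ((hcont z₀ hmem).smul hg).intervalIntegrable
  · exact ((((hcont z₀ hmem).pow 2).smul hg).mono uIoc_subset_uIcc).aestronglyMeasurable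
      measurableSet_uIoc
  · refine Eventually.of_forall fun x hx z hz => ?_
    rw [norm_smul, norm_pow, norm_inv]
    have := hfar x (uIoc_subset_uIcc hx) z hz
    gcongr
  · exact (continuousOn_const.mul hg.norm).intervalIntegrable
  · refine Eventually.of_forall fun x hx z hz => ?_
    have h := ((hasDerivAt_id z).const_sub (γ x)).inv (hne x (uIoc_subset_uIcc hx) z hz)
    rw [neg_neg, one_div, ← inv_pow] at h
    exact h.smul_const (g x)

lemma log_I_mul_of_re_pos {w : ℂ} (hw : 0 < w.re) : log (I * w) = Real.pi / 2 * I + log w := by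
  have hw0 : w ≠ 0 := by
    rintro rfl
    simp at hw
  have harg := abs_lt.1 (abs_arg_lt_pi_div_two_iff.2 (Or.inl hw))
  rw [(log_mul_eq_add_log_iff I_ne_zero hw0).2, log_I]
  rw [arg_I]
  constructor <;> linarith [Real.pi_pos]

lemma integral_boundary_rect_inv {p q r s : ℝ} (hp : p < 0) (hq : 0 < q) (hr : r < 0)
    (hs : 0 < s) :
    (∫ x : ℝ in p..q, ((x : ℂ) + r * I)⁻¹) - (∫ x : ℝ in p..q, ((x : ℂ) + s * I)⁻¹) +
      I • (∫ y : ℝ in r..s, ((q : ℂ) + y * I)⁻¹) - I • (∫ y : ℝ in r..s, ((p : ℂ) + y * I)⁻¹) =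
      2 * Real.pi * I := by
  have key : ∀ (u v w : ℂ) (a b : ℝ), (∀ x : ℝ, 0 < (u * (x * v + w)).re) → u ≠ 0 →
      v * (∫ x : ℝ in a..b, ((x : ℂ) * v + w)⁻¹) =
        log (u * (b * v + w)) - log (u * (a * v + w)) := by
    intro u v w a b hre hu
    have hne : ∀ x : ℝ, (x : ℂ) * v + w ≠ 0 := by
      intro x hx
      have := hre x
      rw [hx] at this
      simp at this
    rw [← intervalIntegral.integral_const_mul]
    refine intervalIntegral.integral_eq_sub_of_hasDerivAt
      (f := fun x : ℝ => log (u * (x * v + w))) (fun x _ => ?_) ?_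
    · have h1 : HasDerivAt (fun x : ℝ => u * ((x : ℂ) * v + w)) (u * (1 * v)) x :=
        ((((hasDerivAt_id (x : ℂ)).comp_ofReal).mul_const v).add_const w).const_mul u
      have h2 := h1.clog_real (Or.inl (hre x))
      rwa [one_mul, mul_div_mul_left _ _ hu, div_eq_mul_inv] at h2
    · refine Continuous.intervalIntegrable ?_ _ _
      exact continuous_const.mul (Continuous.inv₀ (by fun_prop) hne)
  have hb := key I 1 (r * I) p q (by intro x; simp; linarith) I_ne_zero
  have ht := key (-I) 1 (s * I) p q (by intro x; simp; linarith) (by simp)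
  have hri := key 1 I q r s (by intro x; simp; linarith) one_ne_zero
  have hl := key (-1) I p r s (by intro x; simp; linarith) (by simp)
  simp only [mul_one, one_mul] at hb ht hri hl
  have e1 : ∀ (c y : ℝ), (c : ℂ) + y * I = y * I + c := fun c y => add_comm _ _
  rw [smul_eq_mul, smul_eq_mul]
  simp_rw [e1 q, e1 p]
  rw [hb, ht, hri, hl]
  have k1 := log_I_mul_of_re_pos (w := (r : ℂ) * I + q) (by simpa using hq)
  have k2 := log_I_mul_of_re_pos (w := I * ((p : ℂ) + r * I)) (by simpa using hr)
  have k3 := log_I_mul_of_re_pos (w := -I * ((q : ℂ) + s * I)) (by simpa using hs)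
  have k4 := log_I_mul_of_re_pos (w := -1 * ((s : ℂ) * I + p)) (by simpa using hp)
  have j2 : I * (I * ((p : ℂ) + r * I)) = -1 * (r * I + p) := by
    linear_combination (p + r * I) * I_mul_I
  have j3 : I * (-I * ((q : ℂ) + s * I)) = s * I + q := by
    linear_combination -(q + s * I) * I_mul_I
  have j4 : I * (-1 * ((s : ℂ) * I + p)) = -I * (p + s * I) := by ring
  have j1 : I * ((r : ℂ) * I + q) = I * (q + r * I) := by ring
  rw [j1] at k1
  rw [j2] at k2
  rw [j3] at k3
  rw [j4] at k4
  linear_combination k1 + k2 + k3 + k4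

lemma cauchy_integral_formula_rect [CompleteSpace E] {G : ℂ → E} {a b c d : ℝ}
    {U : Set ℂ} (hU : IsOpen U) (hG : DifferentiableOn ℂ G U)
    (hsub : Icc a b ×ℂ Icc c d ⊆ U) {z : ℂ} (hz : z ∈ Ioo a b ×ℂ Ioo c d) :
    (∫ x : ℝ in a..b, ((x : ℂ) + c * I - z)⁻¹ • G (x + c * I)) -
      (∫ x : ℝ in a..b, ((x : ℂ) + d * I - z)⁻¹ • G (x + d * I)) +
      I • (∫ y : ℝ in c..d, ((b : ℂ) + y * I - z)⁻¹ • G (b + y * I)) -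
      I • (∫ y : ℝ in c..d, ((a : ℂ) + y * I - z)⁻¹ • G (a + y * I)) = (2 * Real.pi * I) • G z := by
  obtain ⟨⟨hza, hzb⟩, ⟨hzc, hzd⟩⟩ := hz
  have hzU : U ∈ 𝓝 z := hU.mem_nhds (hsub ⟨⟨hza.le, hzb.le⟩, ⟨hzc.le, hzd.le⟩⟩)
  have hab : a ≤ b := (hza.trans hzb).le
  have hcd : c ≤ d := (hzc.trans hzd).le
  have hslope : DifferentiableOn ℂ (dslope G z) U := (differentiableOn_dslope hzU).2 hG
  have h0 := integral_boundary_rect_eq_zero_of_differentiableOn (dslope G z) (a + c * I)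
    (b + d * I) (hslope.mono (by simpa [uIcc_of_le hab, uIcc_of_le hcd] using hsub))
  simp only [add_re, ofReal_re, mul_re, I_re, mul_zero, ofReal_im, I_im, mul_one, sub_self,
    add_zero, add_im, mul_im, zero_add] at h0
  have hkey : ∀ (γ : ℝ → ℂ) (p q : ℝ), Continuous γ → p ≤ q → (∀ x ∈ Icc p q, γ x ∈ U) →
      (∀ x, γ x ≠ z) → ∫ x in p..q, (γ x - z)⁻¹ • G (γ x) =
        (∫ x in p..q, dslope G z (γ x)) + (∫ x in p..q, (γ x - z)⁻¹) • G z := by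
    intro γ p q hγ hpq hγU hγz
    have hne : ∀ x, γ x - z ≠ 0 := fun x => sub_ne_zero.2 (hγz x)
    rw [← intervalIntegral.integral_smul_const, ← intervalIntegral.integral_add]
    · refine intervalIntegral.integral_congr fun x _ => ?_
      simp only [dslope_of_ne _ (hγz x), slope_def_module, smul_sub, sub_add_cancel]
    · refine ContinuousOn.intervalIntegrable ?_
      rw [uIcc_of_le hpq]
      exact hslope.continuousOn.comp hγ.continuousOn hγU
    · refine Continuous.intervalIntegrable ?_ _ _
      exact (Continuous.inv₀ (by fun_prop) hne).smul continuous_const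
  have hne_im : ∀ t : ℝ, t ≠ z.im → ∀ x : ℝ, (x : ℂ) + t * I ≠ z := by
    rintro t ht x rfl
    simp at ht
  have hne_re : ∀ t : ℝ, t ≠ z.re → ∀ y : ℝ, (t : ℂ) + y * I ≠ z := by
    rintro t ht x rfl
    simp at ht
  rw [hkey (fun x => x + c * I) a b (by fun_prop) hab
      (fun x hx => hsub (by simpa [mem_reProdIm] using ⟨hx, hcd⟩)) (hne_im c hzc.ne),
    hkey (fun x => x + d * I) a b (by fun_prop) hab
      (fun x hx => hsub (by simpa [mem_reProdIm] using ⟨hx, hcd⟩)) (hne_im d hzd.ne'),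
    hkey (fun y => b + y * I) c d (by fun_prop) hcd
      (fun x hx => hsub (by simpa [mem_reProdIm] using ⟨hab, hx⟩)) (hne_re b hzb.ne'),
    hkey (fun y => a + y * I) c d (by fun_prop) hcd
      (fun x hx => hsub (by simpa [mem_reProdIm] using ⟨hab, hx⟩)) (hne_re a hza.ne)]
  have hconst := integral_boundary_rect_inv (sub_neg.2 hza) (sub_pos.2 hzb) (sub_neg.2 hzc)
    (sub_pos.2 hzd)
  have hx : ∀ t : ℝ, ∫ x : ℝ in a - z.re..b - z.re, ((x : ℂ) + (t - z.im : ℝ) * I)⁻¹ =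
      ∫ x : ℝ in a..b, ((x : ℂ) + t * I - z)⁻¹ := by
    intro t
    rw [← intervalIntegral.integral_comp_sub_right
      (fun x : ℝ => ((x : ℂ) + (t - z.im : ℝ) * I)⁻¹) z.re]
    congr 1 with x
    congr 1
    apply Complex.ext <;> simp
  have hy : ∀ t : ℝ, ∫ y : ℝ in c - z.im..d - z.im, (((t - z.re : ℝ) : ℂ) + y * I)⁻¹ =
      ∫ y : ℝ in c..d, ((t : ℂ) + y * I - z)⁻¹ := by
    intro t
    rw [← intervalIntegral.integral_comp_sub_right
      (fun y : ℝ => (((t - z.re : ℝ) : ℂ) + y * I)⁻¹) z.im]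
    congr 1 with x
    congr 1
    apply Complex.ext <;> simp
  rw [hx, hx, hy, hy] at hconst
  rw [← hconst, ← sub_eq_zero, ← h0]
  simp only [smul_eq_mul, smul_add, add_smul, sub_smul, mul_smul]
  abel

/-- Holomorphic functions on `U ∩ V` are differences of holomorphic functions on `U'` and `V'`. -/
def HasHolomorphicSplitting (E : Type*) [NormedAddCommGroup E] [NormedSpace ℂ E]
    (U V U' V' : Set ℂ) : Prop :=
  ∀ G : ℂ → E, DifferentiableOn ℂ G (U ∩ V) → ∃ G₁ G₂ : ℂ → E, DifferentiableOn ℂ G₁ U' ∧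
    DifferentiableOn ℂ G₂ V' ∧ ∀ z ∈ U' ∩ V', G z = G₁ z - G₂ z

lemma hasHolomorphicSplitting_vertical [CompleteSpace E] {U V : Set ℂ} (hU : IsOpen U)
    (hV : IsOpen V) {a b c d : ℝ} (hsub : Icc a b ×ℂ Icc c d ⊆ U ∩ V) :
    HasHolomorphicSplitting E U V (Iio b ×ℂ Ioo c d) (Ioi a ×ℂ Ioo c d) := by
  intro G hG
  by_cases habcd : a < b ∧ c < d
  swap
  · refine ⟨0, 0, differentiableOn_const _, differentiableOn_const _, ?_⟩
    rintro z ⟨⟨h1, h2⟩, h3, -⟩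
    exact absurd ⟨(mem_Ioi.1 h3).trans (mem_Iio.1 h1), h2.1.trans h2.2⟩ habcd
  obtain ⟨hab, hcd⟩ := habcd
  have hGc : ∀ (γ : ℝ → ℂ) (p q : ℝ), Continuous γ → p ≤ q →
      (∀ x ∈ Icc p q, γ x ∈ U ∩ V) → ContinuousOn (fun x => G (γ x)) (uIcc p q) := by
    intro γ p q hγ hpq h
    rw [uIcc_of_le hpq]
    exact hG.continuousOn.comp hγ.continuousOn h
  have hh : ∀ t ∈ Icc c d, ∀ x ∈ Icc a b, (x : ℂ) + t * I ∈ U ∩ V := fun t ht x hx =>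
    hsub (by simpa [mem_reProdIm] using ⟨hx, ht⟩)
  have hGh : ∀ t ∈ Icc c d, ContinuousOn (fun x : ℝ => G (x + t * I)) (uIcc a b) := fun t ht =>
    hGc (fun x => x + t * I) a b (by fun_prop) hab.le (hh t ht)
  have hGv : ∀ t ∈ Icc a b, ContinuousOn (fun y : ℝ => G (t + y * I)) (uIcc c d) := fun t ht =>
    hGc (fun y => t + y * I) c d (by fun_prop) hcd.le fun y hy => hh y hy t ht
  have hb := differentiableOn_integral_cauchy_kernel (γ := fun x => x + c * I) (by fun_prop)
    (hGh c ⟨le_rfl, hcd.le⟩) (U := Iio b ×ℂ Ioo c d) (by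
      rintro z ⟨-, hz⟩ x - rfl
      simp at hz)
  have ht := differentiableOn_integral_cauchy_kernel (γ := fun x => x + d * I) (by fun_prop)
    (hGh d ⟨hcd.le, le_rfl⟩) (U := Iio b ×ℂ Ioo c d) (by
      rintro z ⟨-, hz⟩ x - rfl
      simp at hz)
  have hr := differentiableOn_integral_cauchy_kernel (γ := fun y => b + y * I) (by fun_prop)
    (hGv b ⟨hab.le, le_rfl⟩) (U := Iio b ×ℂ Ioo c d) (by
      rintro z ⟨hz, -⟩ x - rfl
      simp at hz)
  have hl := differentiableOn_integral_cauchy_kernel (γ := fun y => a + y * I) (by fun_prop)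
    (hGv a ⟨le_rfl, hab.le⟩) (U := Ioi a ×ℂ Ioo c d) (by
      rintro z ⟨hz, -⟩ x - rfl
      simp at hz)
  refine ⟨_, _, ((hb.sub ht).add (hr.const_smul I)).const_smul (2 * Real.pi * I)⁻¹,
    (hl.const_smul I).const_smul (2 * Real.pi * I)⁻¹, ?_⟩
  rintro z ⟨⟨hz1, hz2⟩, hz3, -⟩
  have h := cauchy_integral_formula_rect (hU.inter hV) hG hsub (z := z) ⟨⟨hz3, hz1⟩, hz2⟩
  have h2 : (2 * Real.pi * I : ℂ) ≠ 0 := two_pi_I_ne_zero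
  simp only [Pi.smul_apply, Pi.add_apply, Pi.sub_apply]
  rw [← smul_sub, h, smul_smul, inv_mul_cancel₀ h2, one_smul]

lemma hasHolomorphicSplitting_horizontal [CompleteSpace E] {U V : Set ℂ} (hU : IsOpen U)
    (hV : IsOpen V) {a b c d : ℝ} (hsub : Icc a b ×ℂ Icc c d ⊆ U ∩ V) :
    HasHolomorphicSplitting E U V (Ioo a b ×ℂ Iio d) (Ioo a b ×ℂ Ioi c) := by
  intro G hG
  let rot : ℂ → ℂ := fun z => -I * z
  have hrotd : Differentiable ℂ rot := (differentiable_id).const_mul _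
  let rot' : ℂ → ℂ := fun z => I * z
  have hrotd' : Differentiable ℂ rot' := (differentiable_id).const_mul _
  have hrr : ∀ z, rot' (rot z) = z := fun z => by
    simp only [rot, rot']; linear_combination -z * I_mul_I
  have hre : ∀ z, (rot z).re = z.im := fun z => by simp [rot]
  have him : ∀ z, (rot z).im = -z.re := fun z => by simp [rot]
  have hre' : ∀ z, (rot' z).re = -z.im := fun z => by simp [rot']
  have him' : ∀ z, (rot' z).im = z.re := fun z => by simp [rot']
  have hsub' : Icc c d ×ℂ Icc (-b) (-a) ⊆ rot' ⁻¹' U ∩ rot' ⁻¹' V := by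
    rintro z ⟨⟨h1, h2⟩, ⟨h3, h4⟩⟩
    apply hsub
    simp only [mem_reProdIm, hre', him', mem_Icc]
    exact ⟨⟨by linarith, by linarith⟩, h1, h2⟩
  obtain ⟨G₁, G₂, h₁, h₂, h₁₂⟩ := hasHolomorphicSplitting_vertical (E := E)
    (hU.preimage hrotd'.continuous) (hV.preimage hrotd'.continuous) hsub' (G ∘ rot')
    (hG.comp hrotd'.differentiableOn fun z hz => hz)
  refine ⟨G₁ ∘ rot, G₂ ∘ rot, h₁.comp hrotd.differentiableOn ?_,
    h₂.comp hrotd.differentiableOn ?_, ?_⟩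
  · rintro z ⟨⟨hz1, hz2⟩, hz3⟩
    simp only [mem_reProdIm, hre, him, mem_Iio, mem_Ioo]
    exact ⟨hz3, by linarith, by linarith⟩
  · rintro z ⟨⟨hz1, hz2⟩, hz3⟩
    simp only [mem_reProdIm, hre, him, mem_Ioi, mem_Ioo]
    exact ⟨hz3, by linarith, by linarith⟩
  · rintro z ⟨⟨⟨hz1, hz2⟩, hz3⟩, -, hz4⟩
    have := h₁₂ (rot z) (by
      simp only [mem_inter_iff, mem_reProdIm, hre, him, mem_Ioi, mem_Iio, mem_Ioo]
      exact ⟨⟨hz3, by linarith, by linarith⟩, hz4, by linarith, by linarith⟩)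
    simpa [hrr] using this

end RectangleSplitting

section LocalToGlobal

open Complex

lemma interval_induction_of_local {Q : ℝ → ℝ → Prop} {a b : ℝ} (hab : a ≤ b)
    (hadd : ∀ s t u, a ≤ s → s ≤ t → t ≤ u → u ≤ b → Q s t → Q t u → Q s u)
    (hloc : ∀ x ∈ Icc a b, ∃ δ > 0, ∀ s t, x - δ < s → s ≤ t → t < x + δ → Q s t) :
    Q a b := by
  let S : Set ℝ := {t | t ∈ Icc a b ∧ Q a t}
  have haS : a ∈ S := by
    obtain ⟨δ, hδ, h⟩ := hloc a ⟨le_rfl, hab⟩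
    exact ⟨⟨le_rfl, hab⟩, h a a (by linarith) le_rfl (by linarith)⟩
  have hbdd : BddAbove S := ⟨b, fun t ht => ht.1.2⟩
  have hle : sSup S ≤ b := csSup_le ⟨a, haS⟩ fun t ht => ht.1.2
  obtain ⟨δ, hδ, h⟩ := hloc (sSup S) ⟨le_csSup hbdd haS, hle⟩
  obtain ⟨s, hsS, hs⟩ := exists_lt_of_lt_csSup ⟨a, haS⟩ (sub_lt_self (sSup S) hδ)
  have hs' : s ≤ sSup S := le_csSup hbdd hsS
  have hu : min b (sSup S + δ / 2) ∈ S := by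
    have h1 : s ≤ min b (sSup S + δ / 2) := le_min hsS.1.2 (by linarith)
    refine ⟨⟨hsS.1.1.trans h1, min_le_left _ _⟩,
      hadd a s _ le_rfl hsS.1.1 h1 (min_le_left _ _) hsS.2 (h _ _ hs h1 ?_)⟩
    exact (min_le_right _ _).trans_lt (by linarith)
  rcases min_choice b (sSup S + δ / 2) with h1 | h1
  · rw [h1] at hu
    exact hu.2
  · rw [h1] at hu
    have := le_csSup hbdd hu
    linarith

/-- The open rectangle obtained by enlarging `[a, b] × [c, d]` by `ε` on every side. -/
def fatRect (a b c d ε : ℝ) : Set ℂ := Ioo (a - ε) (b + ε) ×ℂ Ioo (c - ε) (d + ε)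

lemma mem_fatRect {a b c d ε : ℝ} {z : ℂ} : z ∈ fatRect a b c d ε ↔
    (a - ε < z.re ∧ z.re < b + ε) ∧ c - ε < z.im ∧ z.im < d + ε := Iff.rfl

lemma isOpen_fatRect (a b c d ε : ℝ) : IsOpen (fatRect a b c d ε) :=
  isOpen_Ioo.reProdIm isOpen_Ioo

lemma fatRect_mono {a b c d ε ε' : ℝ} (h : ε' ≤ ε) : fatRect a b c d ε' ⊆ fatRect a b c d ε := by
  intro z hz
  rw [mem_fatRect] at hz ⊢
  refine ⟨⟨?_, ?_⟩, ?_, ?_⟩ <;> linarith [hz.1.1, hz.1.2, hz.2.1, hz.2.2]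

lemma exists_fatRect_of_local {P : Set ℂ → Prop} (hanti : ∀ U V, V ⊆ U → P U → P V)
    (hv : ∀ s t u y y' ε, s ≤ t → t ≤ u → y ≤ y' → 0 < ε → P (fatRect s t y y' ε) →
      P (fatRect t u y y' ε) → ∃ ε' > 0, P (fatRect s u y y' ε'))
    (hh : ∀ x x' s t u ε, s ≤ t → t ≤ u → x ≤ x' → 0 < ε → P (fatRect x x' s t ε) →
      P (fatRect x x' t u ε) → ∃ ε' > 0, P (fatRect x x' s u ε'))
    {a b c d : ℝ} (hab : a ≤ b) (hcd : c ≤ d)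
    (hloc : ∀ z ∈ Icc a b ×ℂ Icc c d, ∃ U ∈ 𝓝 z, P U) :
    ∃ ε > 0, P (fatRect a b c d ε) := by
  refine interval_induction_of_local (Q := fun s t => ∃ ε > 0, P (fatRect s t c d ε)) hab ?_ ?_
  · rintro s t u - hst htu - ⟨ε₁, hε₁, h₁⟩ ⟨ε₂, hε₂, h₂⟩
    exact hv s t u c d (min ε₁ ε₂) hst htu hcd (lt_min hε₁ hε₂)
      (hanti _ _ (fatRect_mono (min_le_left _ _)) h₁)
      (hanti _ _ (fatRect_mono (min_le_right _ _)) h₂)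
  intro x hx
  obtain ⟨ε, hε, hP⟩ : ∃ ε > 0, P (fatRect x x c d ε) := by
    refine interval_induction_of_local (Q := fun s t => ∃ ε > 0, P (fatRect x x s t ε)) hcd ?_ ?_
    · rintro s t u - hst htu - ⟨ε₁, hε₁, h₁⟩ ⟨ε₂, hε₂, h₂⟩
      exact hh x x s t u (min ε₁ ε₂) hst htu le_rfl (lt_min hε₁ hε₂)
        (hanti _ _ (fatRect_mono (min_le_left _ _)) h₁)
        (hanti _ _ (fatRect_mono (min_le_right _ _)) h₂)
    intro y hy
    obtain ⟨U, hU, hPU⟩ := hloc ⟨x, y⟩ ⟨hx, hy⟩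
    obtain ⟨δ, hδ, hball⟩ := Metric.mem_nhds_iff.1 hU
    refine ⟨δ / 4, by positivity, fun s t hs hst ht =>
      ⟨δ / 4, by positivity, hanti _ _ (fun z hz => hball ?_) hPU⟩⟩
    rw [mem_fatRect] at hz
    obtain ⟨⟨h1, h2⟩, h3, h4⟩ := hz
    rw [mem_ball, dist_eq_norm]
    refine (norm_le_abs_re_add_abs_im _).trans_lt ?_
    have h5 : |(z - ⟨x, y⟩ : ℂ).re| < δ / 2 := by
      rw [sub_re, abs_lt]
      constructor <;> dsimp only <;> linarith
    have h6 : |(z - ⟨x, y⟩ : ℂ).im| < δ / 2 := by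
      rw [sub_im, abs_lt]
      constructor <;> dsimp only <;> linarith
    linarith
  refine ⟨ε / 2, by positivity, fun s t hs hst ht =>
    ⟨ε / 2, by positivity, hanti _ _ (fun z hz => ?_) hP⟩⟩
  rw [mem_fatRect] at hz ⊢
  refine ⟨⟨?_, ?_⟩, ?_, ?_⟩ <;> linarith [hz.1.1, hz.1.2, hz.2.1, hz.2.2]

variable {E : Type*} [NormedAddCommGroup E] [NormedSpace ℂ E]

lemma HasHolomorphicSplitting.mono {U V U₁ V₁ U₂ V₂ : Set ℂ}
    (h : HasHolomorphicSplitting E U V U₁ V₁) (hU : U₂ ⊆ U₁) (hV : V₂ ⊆ V₁) :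
    HasHolomorphicSplitting E U V U₂ V₂ := by
  intro G hG
  obtain ⟨G₁, G₂, h₁, h₂, h₁₂⟩ := h G hG
  exact ⟨G₁, G₂, h₁.mono hU, h₂.mono hV, fun z hz => h₁₂ z ⟨hU hz.1, hV hz.2⟩⟩

lemma hasHolomorphicSplitting_fatRect_vertical [CompleteSpace E] {s t u y y' ε : ℝ} (hst : s ≤ t)
    (htu : t ≤ u) (hε : 0 < ε) :
    HasHolomorphicSplitting E (fatRect s t y y' ε) (fatRect t u y y' ε)
      (fatRect s t y y' (ε / 2)) (fatRect t u y y' (ε / 2)) := by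
  refine (hasHolomorphicSplitting_vertical (a := t - ε / 2) (b := t + ε / 2) (c := y - ε / 2)
    (d := y' + ε / 2) (isOpen_fatRect _ _ _ _ _) (isOpen_fatRect _ _ _ _ _) ?_).mono ?_ ?_
  · rintro z ⟨⟨h1, h2⟩, h3, h4⟩
    simp only [mem_inter_iff, mem_fatRect]
    refine ⟨⟨⟨?_, ?_⟩, ?_, ?_⟩, ⟨?_, ?_⟩, ?_, ?_⟩ <;> linarith
  · rintro z ⟨⟨h1, h2⟩, h3⟩
    exact ⟨h2, h3⟩
  · rintro z ⟨⟨h1, h2⟩, h3⟩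
    exact ⟨h1, h3⟩

lemma hasHolomorphicSplitting_fatRect_horizontal [CompleteSpace E] {s t u x x' ε : ℝ}
    (hst : s ≤ t) (htu : t ≤ u) (hε : 0 < ε) :
    HasHolomorphicSplitting E (fatRect x x' s t ε) (fatRect x x' t u ε)
      (fatRect x x' s t (ε / 2)) (fatRect x x' t u (ε / 2)) := by
  refine (hasHolomorphicSplitting_horizontal (a := x - ε / 2) (b := x' + ε / 2) (c := t - ε / 2)
    (d := t + ε / 2) (isOpen_fatRect _ _ _ _ _) (isOpen_fatRect _ _ _ _ _) ?_).mono ?_ ?_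
  · rintro z ⟨⟨h1, h2⟩, h3, h4⟩
    simp only [mem_inter_iff, mem_fatRect]
    refine ⟨⟨⟨?_, ?_⟩, ?_, ?_⟩, ⟨?_, ?_⟩, ?_, ?_⟩ <;> linarith
  · rintro z ⟨h1, h2, h3⟩
    exact ⟨h1, h3⟩
  · rintro z ⟨h1, h2, h3⟩
    exact ⟨h1, h2⟩

lemma fatRect_subset_union_vertical {s t u y y' ε : ℝ} (hε : 0 < ε) :
    fatRect s u y y' ε ⊆ fatRect s t y y' ε ∪ fatRect t u y y' ε := by
  rintro z ⟨⟨h1, h2⟩, h3⟩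
  rcases lt_or_ge z.re (t + ε) with h | h
  · exact Or.inl ⟨⟨h1, h⟩, h3⟩
  · exact Or.inr ⟨⟨by linarith, h2⟩, h3⟩

lemma fatRect_subset_union_horizontal {s t u x x' ε : ℝ} (hε : 0 < ε) :
    fatRect x x' s u ε ⊆ fatRect x x' s t ε ∪ fatRect x x' t u ε := by
  rintro z ⟨h3, h1, h2⟩
  rcases lt_or_ge z.im (t + ε) with h | h
  · exact Or.inl ⟨h3, h1, h⟩
  · exact Or.inr ⟨h3, by linarith, h2⟩

lemma fatRect_inter_vertical {s t u y y' ε : ℝ} (hst : s ≤ t) (htu : t ≤ u) :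
    fatRect s t y y' ε ∩ fatRect t u y y' ε = fatRect t t y y' ε := by
  ext z
  simp only [mem_inter_iff, mem_fatRect]
  constructor
  · rintro ⟨⟨⟨h1, h2⟩, h3⟩, ⟨h4, h5⟩, -⟩
    exact ⟨⟨h4, h2⟩, h3⟩
  · rintro ⟨⟨h1, h2⟩, h3⟩
    exact ⟨⟨⟨by linarith, h2⟩, h3⟩, ⟨h1, by linarith⟩, h3⟩

lemma fatRect_inter_horizontal {s t u x x' ε : ℝ} (hst : s ≤ t) (htu : t ≤ u) :
    fatRect x x' s t ε ∩ fatRect x x' t u ε = fatRect x x' t t ε := by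
  ext z
  simp only [mem_inter_iff, mem_fatRect]
  constructor
  · rintro ⟨⟨h3, h1, h2⟩, -, h4, h5⟩
    exact ⟨h3, h4, h2⟩
  · rintro ⟨h3, h1, h2⟩
    exact ⟨⟨h3, by linarith, h2⟩, h3, h1, by linarith⟩

lemma exists_differentiableOn_union {U V : Set ℂ} (hU : IsOpen U) (hV : IsOpen V) {f g : ℂ → E}
    (hf : DifferentiableOn ℂ f U) (hg : DifferentiableOn ℂ g V) (hfg : EqOn f g (U ∩ V)) :
    ∃ h : ℂ → E, DifferentiableOn ℂ h (U ∪ V) ∧ EqOn h f U ∧ EqOn h g V := by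
  classical
  have h1 : EqOn (U.piecewise f g) f U := piecewise_eqOn U f g
  have h2 : EqOn (U.piecewise f g) g V := by
    intro z hz
    by_cases hzU : z ∈ U
    · rw [h1 hzU, hfg ⟨hzU, hz⟩]
    · exact piecewise_eq_of_notMem _ _ _ hzU
  refine ⟨U.piecewise f g, ?_, h1, h2⟩
  rintro z (hz | hz)
  · exact (((hf.congr h1) z hz).differentiableAt (hU.mem_nhds hz)).differentiableWithinAt
  · exact (((hg.congr h2) z hz).differentiableAt (hV.mem_nhds hz)).differentiableWithinAt

end LocalToGlobal

section Pencil

variable {A : Type*} [NormedCommRing A] [NormedAlgebra ℂ A]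

/-- The function `z ↦ z • 1 - a`. -/
def pencil (a : A) (z : ℂ) : A := algebraMap ℂ A z - a

lemma differentiable_pencil (a : A) : Differentiable ℂ (pencil a) :=
  (algebraMapCLM ℂ A).differentiable.sub_const a

lemma pencil_sub_pencil (a : A) (z c : ℂ) : pencil a z - pencil a c = algebraMap ℂ A (z - c) := by
  simp [pencil]

lemma pencil_mul_resolvent {a : A} {z : ℂ} (hz : z ∈ resolventSet ℂ a) :
    pencil a z * resolvent a z = 1 :=
  Ring.mul_inverse_cancel _ hz

/-- `f` is on `U` a holomorphic multiple of `z ↦ z - a`. -/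
def IsPencilMultiple (a : A) (U : Set ℂ) (f : ℂ → A) : Prop :=
  ∃ V : ℂ → A, DifferentiableOn ℂ V U ∧ ∀ z ∈ U, f z = pencil a z * V z

variable {a : A} {U V U' V' : Set ℂ} {f g f₁ f₂ : ℂ → A}

lemma IsPencilMultiple.mono (h : IsPencilMultiple a U f) (hV : V ⊆ U) : IsPencilMultiple a V f := by
  obtain ⟨v, hv, h⟩ := h
  exact ⟨v, hv.mono hV, fun z hz => h z (hV hz)⟩

lemma IsPencilMultiple.congr (h : IsPencilMultiple a U f) (hfg : ∀ z ∈ U, g z = f z) :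
    IsPencilMultiple a U g := by
  obtain ⟨v, hv, h⟩ := h
  exact ⟨v, hv, fun z hz => (hfg z hz).trans (h z hz)⟩

lemma IsPencilMultiple.mul_left (h : IsPencilMultiple a U f) (hg : DifferentiableOn ℂ g U) :
    IsPencilMultiple a U (fun z => g z * f z) := by
  obtain ⟨v, hv, h⟩ := h
  exact ⟨fun z => g z * v z, hg.mul hv, fun z hz => by simp only [h z hz]; ring⟩

lemma IsPencilMultiple.add (h : IsPencilMultiple a U f) (h' : IsPencilMultiple a U g) :
    IsPencilMultiple a U (fun z => f z + g z) := by
  obtain ⟨v, hv, h⟩ := h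
  obtain ⟨v', hv', h'⟩ := h'
  exact ⟨fun z => v z + v' z, hv.add hv', fun z hz => by simp only [h z hz, h' z hz]; ring⟩

lemma IsPencilMultiple.character_eq_zero (h : IsPencilMultiple a U f)
    (φ : WeakDual.characterSpace ℂ A) (hφ : φ a ∈ U) : φ (f (φ a)) = 0 := by
  obtain ⟨v, hv, h⟩ := h
  rw [h _ hφ, map_mul]
  simp [pencil, AlgHomClass.commutes]

/-- Two opens `U`, `V` with smaller opens `U'`, `V'` allowing a holomorphic Cousin splitting. -/
structure IsCousinPair (A : Type*) [NormedAddCommGroup A] [NormedSpace ℂ A]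
    (U V U' V' : Set ℂ) : Prop where
  isOpen_left : IsOpen U'
  isOpen_right : IsOpen V'
  subset_left : U' ⊆ U
  subset_right : V' ⊆ V
  splitting : HasHolomorphicSplitting A U V U' V'

lemma exists_glue_mod_pencil (hC : IsCousinPair A U V U' V')
    (hf₁ : DifferentiableOn ℂ f₁ U) (hf₂ : DifferentiableOn ℂ f₂ V)
    (h : IsPencilMultiple a (U ∩ V) (fun z => f₁ z - f₂ z)) :
    ∃ f : ℂ → A, DifferentiableOn ℂ f (U' ∪ V') ∧ IsPencilMultiple a U' (fun z => f z - f₁ z) ∧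
      IsPencilMultiple a V' (fun z => f z - f₂ z) := by
  obtain ⟨G, hG, hG'⟩ := h
  obtain ⟨G₁, G₂, h₁, h₂, h₁₂⟩ := hC.splitting G hG
  obtain ⟨f, hf, hfU, hfV⟩ := exists_differentiableOn_union hC.isOpen_left hC.isOpen_right
    (f := fun z => f₁ z - pencil a z * G₁ z) (g := fun z => f₂ z - pencil a z * G₂ z)
    ((hf₁.mono hC.subset_left).sub ((differentiable_pencil a).differentiableOn.mul h₁))
    ((hf₂.mono hC.subset_right).sub ((differentiable_pencil a).differentiableOn.mul h₂))
    (fun z hz => by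
      have e1 := hG' z ⟨hC.subset_left hz.1, hC.subset_right hz.2⟩
      have e2 := h₁₂ z hz
      simp only at e1 ⊢
      linear_combination e1 + pencil a z * e2)
  refine ⟨f, hf, ⟨fun z => - G₁ z, h₁.neg, fun z hz => ?_⟩, ⟨fun z => - G₂ z, h₂.neg,
    fun z hz => ?_⟩⟩
  · simp only [hfU hz]; ring
  · simp only [hfV hz]; ring

lemma IsPencilMultiple.sq_union (hU : IsOpen U) (hV : IsOpen V) (hf : DifferentiableOn ℂ f (U ∪ V))
    (h₁ : IsPencilMultiple a U f) (h₂ : IsPencilMultiple a V f) :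
    IsPencilMultiple a (U ∪ V) (fun z => f z ^ 2) := by
  obtain ⟨v₁, hv₁, h₁⟩ := h₁
  obtain ⟨v₂, hv₂, h₂⟩ := h₂
  obtain ⟨v, hv, hvU, hvV⟩ := exists_differentiableOn_union hU hV
    (f := fun z => v₁ z * f z) (g := fun z => v₂ z * f z)
    (hv₁.mul (hf.mono subset_union_left)) (hv₂.mul (hf.mono subset_union_right))
    (fun z hz => by
      have e1 := h₁ z hz.1
      have e2 := h₂ z hz.2
      simp only
      linear_combination v₁ z * e2 - v₂ z * e1)
  refine ⟨v, hv, ?_⟩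
  rintro z (hz | hz)
  · rw [hvU hz]
    linear_combination f z * h₁ z hz
  · rw [hvV hz]
    linear_combination f z * h₂ z hz

/-- `g` is invertible on `U` modulo holomorphic multiples of `z - a`. -/
def IsInvertibleModPencil (a : A) (g : ℂ → A) (U : Set ℂ) : Prop :=
  DifferentiableOn ℂ g U ∧
    ∃ u : ℂ → A, DifferentiableOn ℂ u U ∧ IsPencilMultiple a U (fun z => g z * u z - 1)

lemma IsInvertibleModPencil.mono (h : IsInvertibleModPencil a g U) (hV : V ⊆ U) :
    IsInvertibleModPencil a g V := by
  obtain ⟨hg, u, hu, h⟩ := h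
  exact ⟨hg.mono hV, u, hu.mono hV, h.mono hV⟩

lemma IsInvertibleModPencil.union (hC : IsCousinPair A U V U' V')
    (h₁ : IsInvertibleModPencil a g U) (h₂ : IsInvertibleModPencil a g V) :
    IsInvertibleModPencil a g (U' ∪ V') := by
  obtain ⟨hgU, u₁, hu₁, v₁, hv₁, h₁⟩ := h₁
  obtain ⟨hgV, u₂, hu₂, v₂, hv₂, h₂⟩ := h₂
  have hdU : DifferentiableOn ℂ g U' := hgU.mono hC.subset_left
  have hdV : DifferentiableOn ℂ g V' := hgV.mono hC.subset_right
  have hg : DifferentiableOn ℂ g (U' ∪ V') :=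
    hdU.union_of_isOpen hdV hC.isOpen_left hC.isOpen_right
  obtain ⟨u, hu, hu1, hu2⟩ := exists_glue_mod_pencil (a := a) hC hu₁ hu₂
    ⟨fun z => u₂ z * v₁ z - u₁ z * v₂ z,
      ((hu₂.mono inter_subset_right).mul (hv₁.mono inter_subset_left)).sub
        ((hu₁.mono inter_subset_left).mul (hv₂.mono inter_subset_right)), fun z hz => by
      have e1 := h₁ z hz.1
      have e2 := h₂ z hz.2
      simp only at e1 e2 ⊢
      linear_combination u₂ z * e1 - u₁ z * e2⟩
  have hn : DifferentiableOn ℂ (fun z => g z * u z - 1) (U' ∪ V') := (hg.mul hu).sub_const 1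
  have hn1 : IsPencilMultiple a U' (fun z => g z * u z - 1) :=
    ((hu1.mul_left hdU).add (IsPencilMultiple.mono ⟨v₁, hv₁, h₁⟩ hC.subset_left)).congr
      fun z _ => by ring
  have hn2 : IsPencilMultiple a V' (fun z => g z * u z - 1) :=
    ((hu2.mul_left hdV).add (IsPencilMultiple.mono ⟨v₂, hv₂, h₂⟩ hC.subset_right)).congr
      fun z _ => by ring
  have hn3 := IsPencilMultiple.sq_union hC.isOpen_left hC.isOpen_right hn hn1 hn2
  refine ⟨hg, fun z => u z * (1 - (g z * u z - 1)), hu.mul (hn.const_sub 1), ?_⟩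
  exact (hn3.mul_left (g := fun _ => -1) (differentiableOn_const _)).congr fun z _ => by ring

/-- `E` is on `U` an idempotent modulo `z - a` with prescribed character values `χ`. -/
structure IsIdempotentModPencil (a : A) (χ : WeakDual.characterSpace ℂ A → ℂ) (U : Set ℂ)
    (E : ℂ → A) : Prop where
  differentiableOn : DifferentiableOn ℂ E U
  idempotent : IsPencilMultiple a U (fun z => E z ^ 2 - E z)
  character : ∀ φ : WeakDual.characterSpace ℂ A, φ a ∈ U → φ (E (φ a)) = χ φ

variable {χ : WeakDual.characterSpace ℂ A → ℂ} {E E₁ E₂ : ℂ → A}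

lemma IsIdempotentModPencil.mono (h : IsIdempotentModPencil a χ U E) (hV : V ⊆ U) :
    IsIdempotentModPencil a χ V E :=
  ⟨h.1.mono hV, h.2.mono hV, fun φ hφ => h.3 φ (hV hφ)⟩

lemma IsIdempotentModPencil.exists_union (hC : IsCousinPair A U V U' V')
    (hχ : ∀ φ, χ φ = 0 ∨ χ φ = 1)
    (h₁ : IsIdempotentModPencil a χ U E₁) (h₂ : IsIdempotentModPencil a χ V E₂)
    (h₁₂ : IsPencilMultiple a (U ∩ V) (fun z => E₁ z - E₂ z)) :
    ∃ E, IsIdempotentModPencil a χ (U' ∪ V') E := by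
  obtain ⟨E, hE, hE1, hE2⟩ := exists_glue_mod_pencil hC h₁.1 h₂.1 h₁₂
  have key : ∀ {W W' : Set ℂ} {F : ℂ → A}, W' ⊆ W → DifferentiableOn ℂ E W' →
      IsIdempotentModPencil a χ W F →
      IsPencilMultiple a W' (fun z => E z - F z) →
      IsPencilMultiple a W' (fun z => E z ^ 2 - E z) := by
    intro W W' F hW hE hF hEF
    refine ((hEF.mul_left (g := fun z => E z + F z - 1)
      ((hE.add (hF.1.mono hW)).sub_const 1)).add (hF.2.mono hW)).congr fun z _ => by ring
  have hw : DifferentiableOn ℂ (fun z => E z ^ 2 - E z) (U' ∪ V') := (hE.pow 2).sub hE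
  have hw2 := IsPencilMultiple.sq_union hC.isOpen_left hC.isOpen_right hw
    (key hC.subset_left (hE.mono subset_union_left) h₁ hE1)
    (key hC.subset_right (hE.mono subset_union_right) h₂ hE2)
  refine ⟨fun z => 3 * E z ^ 2 - 2 * E z ^ 3, ?_, ?_, ?_⟩
  · exact ((hE.pow 2).const_mul 3).sub ((hE.pow 3).const_mul 2)
  · refine (hw2.mul_left (g := fun z => 4 * (E z ^ 2 - E z) - 3)
      ((hw.const_mul 4).sub_const 3)).congr fun z _ => by ring
  · intro φ hφ
    have hval : φ (E (φ a)) = χ φ := by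
      rcases hφ with hφ | hφ
      · rw [← h₁.3 φ (hC.subset_left hφ), ← sub_eq_zero, ← map_sub]
        exact hE1.character_eq_zero φ hφ
      · rw [← h₂.3 φ (hC.subset_right hφ), ← sub_eq_zero, ← map_sub]
        exact hE2.character_eq_zero φ hφ
    have e2 : φ (2 : A) = 2 := map_ofNat φ 2
    have e3 : φ (3 : A) = 3 := map_ofNat φ 3
    simp only [map_sub, map_mul, map_pow, hval, e2, e3]
    rcases hχ φ with h | h <;> rw [h] <;> norm_num

lemma isCousinPair_fatRect_vertical [CompleteSpace A] {s t u y y' ε : ℝ} (hst : s ≤ t)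
    (htu : t ≤ u) (hε : 0 < ε) :
    IsCousinPair A (fatRect s t y y' ε) (fatRect t u y y' ε)
      (fatRect s t y y' (ε / 2)) (fatRect t u y y' (ε / 2)) :=
  ⟨isOpen_fatRect _ _ _ _ _, isOpen_fatRect _ _ _ _ _, fatRect_mono (by linarith),
    fatRect_mono (by linarith), hasHolomorphicSplitting_fatRect_vertical hst htu hε⟩

lemma isCousinPair_fatRect_horizontal [CompleteSpace A] {s t u x x' ε : ℝ} (hst : s ≤ t)
    (htu : t ≤ u) (hε : 0 < ε) :
    IsCousinPair A (fatRect x x' s t ε) (fatRect x x' t u ε)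
      (fatRect x x' s t (ε / 2)) (fatRect x x' t u (ε / 2)) :=
  ⟨isOpen_fatRect _ _ _ _ _, isOpen_fatRect _ _ _ _ _, fatRect_mono (by linarith),
    fatRect_mono (by linarith), hasHolomorphicSplitting_fatRect_horizontal hst htu hε⟩

lemma exists_mul_add_mul_eq_one_of_character [CompleteSpace A] (x y : A)
    (h : ∀ φ : WeakDual.characterSpace ℂ A, φ x = 0 → φ y ≠ 0) : ∃ u v : A, x * u + y * v = 1 := by
  by_contra! hcon
  have hne : Ideal.span {x, y} ≠ ⊤ := by
    intro htop
    have h1 : (1 : A) ∈ Ideal.span {x, y} := by rw [htop]; trivial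
    obtain ⟨u, v, huv⟩ := Ideal.mem_span_pair.1 h1
    exact hcon u v (by rw [← huv]; ring)
  obtain ⟨M, hM, hle⟩ := Ideal.exists_le_maximal _ hne
  have hx : x ∈ M := hle (Ideal.subset_span (by simp))
  have hy : y ∈ M := hle (Ideal.subset_span (by simp))
  exact h M.toCharacterSpace (M.toCharacterSpace_apply_eq_zero_of_mem hx)
    (M.toCharacterSpace_apply_eq_zero_of_mem hy)

lemma exists_nhds_isInvertibleModPencil [CompleteSpace A] {c : ℂ} (hU : U ∈ 𝓝 c)
    (hg : DifferentiableOn ℂ g U)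
    (h : ∀ φ : WeakDual.characterSpace ℂ A, φ a = c → φ (g c) ≠ 0) :
    ∃ W ∈ 𝓝 c, W ⊆ U ∧ IsInvertibleModPencil a g W := by
  obtain ⟨v, u, hvu⟩ := exists_mul_add_mul_eq_one_of_character (pencil a c) (g c) (fun φ hφ => by
    refine h φ ?_
    simp only [pencil, map_sub, AlgHomClass.commutes, Algebra.algebraMap_self, RingHom.id_apply,
      sub_eq_zero] at hφ
    exact hφ.symm)
  let q : ℂ → A := fun z => g z * u + pencil a z * v
  have hq1 : q c = 1 := by rw [← hvu]; simp only [q]; ring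
  have hqd : DifferentiableOn ℂ q U :=
    (hg.mul_const u).add ((differentiable_pencil a).differentiableOn.mul_const v)
  have hqc : ContinuousAt q c := hqd.continuousOn.continuousAt hU
  have hunit : ∀ᶠ z in 𝓝 c, IsUnit (q z) :=
    hqc.eventually (Units.isOpen.mem_nhds (by rw [hq1]; exact isUnit_one))
  refine ⟨{z | IsUnit (q z)} ∩ U, inter_mem hunit hU, inter_subset_right, ?_⟩
  have hinv : DifferentiableOn ℂ (fun z => Ring.inverse (q z)) ({z | IsUnit (q z)} ∩ U) := by
    intro z hz
    obtain ⟨w, hw⟩ := hz.1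
    have h1 : DifferentiableAt ℂ Ring.inverse (q z) := hw ▸ differentiableAt_inverse w.isUnit
    exact h1.comp_differentiableWithinAt z ((hqd.mono inter_subset_right) z hz)
  refine ⟨hg.mono inter_subset_right, fun z => u * Ring.inverse (q z), hinv.const_mul u,
    fun z => - (v * Ring.inverse (q z)), (hinv.const_mul v).neg, fun z hz => ?_⟩
  have := Ring.mul_inverse_cancel _ hz.1
  simp only [q] at this ⊢
  linear_combination this

lemma exists_fatRect_isInvertibleModPencil [CompleteSpace A] {x x' y y' ε : ℝ} (hx : x ≤ x')
    (hy : y ≤ y') (hε : 0 < ε) (hg : DifferentiableOn ℂ g (fatRect x x' y y' ε))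
    (h : ∀ φ : WeakDual.characterSpace ℂ A, φ a ∈ fatRect x x' y y' ε → φ (g (φ a)) ≠ 0) :
    ∃ ε' > 0, ε' ≤ ε ∧ IsInvertibleModPencil a g (fatRect x x' y y' ε') := by
  obtain ⟨ε', hε', h'⟩ := exists_fatRect_of_local (P := IsInvertibleModPencil a g)
    (fun U V hVU hP => hP.mono hVU)
    (fun s t u y y' ε hst htu _ hε h₁ h₂ => ⟨ε / 2, by positivity,
      (h₁.union (isCousinPair_fatRect_vertical hst htu hε) h₂).mono
        (fatRect_subset_union_vertical (by positivity))⟩)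
    (fun x x' s t u ε hst htu _ hε h₁ h₂ => ⟨ε / 2, by positivity,
      (h₁.union (isCousinPair_fatRect_horizontal hst htu hε) h₂).mono
        (fatRect_subset_union_horizontal (by positivity))⟩) hx hy (fun z hz => by
      have hz' : z ∈ fatRect x x' y y' ε := by
        obtain ⟨⟨h1, h2⟩, h3, h4⟩ := hz
        refine ⟨⟨?_, ?_⟩, ?_, ?_⟩ <;> linarith
      obtain ⟨W, hW, -, hinv⟩ := exists_nhds_isInvertibleModPencil (a := a)
        ((isOpen_fatRect _ _ _ _ _).mem_nhds hz') hg (fun φ hφ => by subst hφ; exact h φ hz')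
      exact ⟨W, hW, hinv⟩)
  exact ⟨min ε ε', lt_min hε hε', min_le_left _ _, h'.mono (fatRect_mono (min_le_right _ _))⟩

lemma IsIdempotentModPencil.exists_fatRect_sub [CompleteSpace A] {x x' y y' ε : ℝ} (hx : x ≤ x')
    (hy : y ≤ y') (hε : 0 < ε) (h₁ : IsIdempotentModPencil a χ (fatRect x x' y y' ε) E₁)
    (h₂ : IsIdempotentModPencil a χ (fatRect x x' y y' ε) E₂) :
    ∃ ε' > 0, ε' ≤ ε ∧ IsPencilMultiple a (fatRect x x' y y' ε') (fun z => E₁ z - E₂ z) := by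
  have hD : DifferentiableOn ℂ (fun z => 1 - (E₁ z - E₂ z) ^ 2) (fatRect x x' y y' ε) :=
    ((h₁.1.sub h₂.1).pow 2).const_sub 1
  obtain ⟨ε', hε', hle, -, u, hu, hinv⟩ := exists_fatRect_isInvertibleModPencil (a := a) hx hy hε hD
    (fun φ hφ => by simp [h₁.3 φ hφ, h₂.3 φ hφ])
  have hs := fatRect_mono (a := x) (b := x') (c := y) (d := y') hle
  refine ⟨ε', hε', hle, ?_⟩
  have d₁ := h₁.1.mono hs
  have d₂ := h₂.1.mono hs
  have m₁ : IsPencilMultiple a _ _ := h₁.2.mono hs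
  have m₂ : IsPencilMultiple a _ _ := h₂.2.mono hs
  have hd : DifferentiableOn ℂ (fun z => E₁ z - E₂ z) (fatRect x x' y y' ε') := d₁.sub d₂
  refine ((((hinv.mul_left hd).mul_left (g := fun _ => -1) (differentiableOn_const _)).add
    ((m₁.mul_left ?_ (g := fun z => u z * (- E₁ z - 1 + 3 * E₂ z))).add
      (m₂.mul_left ?_ (g := fun z => u z * (E₂ z - 3 * E₁ z + 1)))))).congr fun z _ => ?_
  · exact hu.mul ((d₁.neg.sub_const 1).add (d₂.const_mul 3))
  · exact hu.mul ((d₂.sub (d₁.const_mul 3)).add_const 1)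
  · ring

lemma exists_fatRect_isIdempotentModPencil [CompleteSpace A] (hχ : ∀ φ, χ φ = 0 ∨ χ φ = 1)
    {x x' y y' : ℝ} (hx : x ≤ x') (hy : y ≤ y')
    (hloc : ∀ z ∈ Icc x x' ×ℂ Icc y y', ∃ U ∈ 𝓝 z, ∃ E, IsIdempotentModPencil a χ U E) :
    ∃ ε > 0, ∃ E, IsIdempotentModPencil a χ (fatRect x x' y y' ε) E := by
  refine exists_fatRect_of_local (P := fun U => ∃ E, IsIdempotentModPencil a χ U E)
    (fun U V hVU ⟨E, hE⟩ => ⟨E, hE.mono hVU⟩) ?_ ?_ hx hy hloc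
  · rintro s t u y y' ε hst htu hyy hε ⟨E₁, h₁⟩ ⟨E₂, h₂⟩
    have hi := fatRect_inter_vertical (y := y) (y' := y') (ε := ε) hst htu
    obtain ⟨ε', hε', hle, hm⟩ := IsIdempotentModPencil.exists_fatRect_sub le_rfl hyy hε
      (h₁.mono (hi ▸ inter_subset_left)) (h₂.mono (hi ▸ inter_subset_right))
    rw [← fatRect_inter_vertical hst htu] at hm
    obtain ⟨E, hE⟩ := IsIdempotentModPencil.exists_union
      (isCousinPair_fatRect_vertical hst htu hε') hχ (h₁.mono (fatRect_mono hle))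
      (h₂.mono (fatRect_mono hle)) hm
    exact ⟨ε' / 2, by positivity, E, hE.mono (fatRect_subset_union_vertical (by positivity))⟩
  · rintro x x' s t u ε hst htu hxx hε ⟨E₁, h₁⟩ ⟨E₂, h₂⟩
    have hi := fatRect_inter_horizontal (x := x) (x' := x') (ε := ε) hst htu
    obtain ⟨ε', hε', hle, hm⟩ := IsIdempotentModPencil.exists_fatRect_sub hxx le_rfl hε
      (h₁.mono (hi ▸ inter_subset_left)) (h₂.mono (hi ▸ inter_subset_right))
    rw [← fatRect_inter_horizontal hst htu] at hm
    obtain ⟨E, hE⟩ := IsIdempotentModPencil.exists_union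
      (isCousinPair_fatRect_horizontal hst htu hε') hχ (h₁.mono (fatRect_mono hle))
      (h₂.mono (fatRect_mono hle)) hm
    exact ⟨ε' / 2, by positivity, E, hE.mono (fatRect_subset_union_horizontal (by positivity))⟩

end Pencil

section LocalIdempotent

variable {A : Type*} [NormedCommRing A] [NormedAlgebra ℂ A] [CompleteSpace A]

lemma exists_sqrt_near_one : ∃ g : A → A, g 1 = 1 ∧ (∀ᶠ x in 𝓝 (1 : A), g x ^ 2 = x) ∧
    ∀ᶠ x in 𝓝 (1 : A), DifferentiableAt ℂ g x := by
  have h2 : ContDiffAt ℂ 1 (fun x : A => x ^ 2) 1 := contDiffAt_id.pow 2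
  let L : A ≃L[ℂ] A := ContinuousLinearEquiv.smulLeft (Units.mk0 (2 : ℂ) two_ne_zero)
  have hL : HasFDerivAt (fun x : A => x ^ 2) (L : A →L[ℂ] A) 1 := by
    have := (hasFDerivAt_id (𝕜 := ℂ) (1 : A)).pow 2
    refine this.congr_fderiv ?_
    ext x
    simp [L, two_smul, Units.smul_def, add_mul]
  have hs := h2.hasStrictFDerivAt' hL one_ne_zero
  have hc := h2.to_localInverse hL one_ne_zero
  refine ⟨h2.localInverse hL one_ne_zero, ?_, ?_, ?_⟩
  · have := h2.localInverse_apply_image hL one_ne_zero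
    simpa using this
  · have h1 := hs.eventually_right_inverse
    rwa [one_pow] at h1
  · have h1 := hc.eventually (by simp)
    simp only [one_pow] at h1
    exact h1.mono fun x hx => hx.differentiableAt one_ne_zero

lemma exists_inv_sqrt_near_zero : ∃ s : A → A, s 0 = 1 ∧ ∀ᶠ w in 𝓝 (0 : A),
    s w ^ 2 * (1 + 4 * w) = 1 ∧ DifferentiableAt ℂ s w := by
  obtain ⟨g, hg1, hg, hgd⟩ := exists_sqrt_near_one (A := A)
  have hd : Differentiable ℂ (fun w : A => 1 + 4 * w) := by fun_prop
  have h0 : Tendsto (fun w : A => 1 + 4 * w) (𝓝 0) (𝓝 1) := by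
    simpa using hd.continuous.tendsto 0
  have hu : ∀ᶠ x in 𝓝 (1 : A), IsUnit x := Units.isOpen.mem_nhds isUnit_one
  have hi : Tendsto Ring.inverse (𝓝 (1 : A)) (𝓝 1) := by
    have := (NormedRing.inverse_continuousAt (1 : Aˣ)).tendsto
    simpa using this
  refine ⟨fun w => g (Ring.inverse (1 + 4 * w)), by simp [hg1], ?_⟩
  filter_upwards [h0.eventually hu, (hi.comp h0).eventually hg, (hi.comp h0).eventually hgd]
    with w hw1 hw2 hw3
  refine ⟨?_, ?_⟩
  · simp only [Function.comp_apply] at hw2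
    rw [hw2, Ring.inverse_mul_cancel _ hw1]
  · refine DifferentiableAt.comp w hw3 ?_
    obtain ⟨x, hx⟩ := hw1
    have h1 : DifferentiableAt ℂ Ring.inverse (1 + 4 * w) := hx ▸ differentiableAt_inverse x.isUnit
    exact h1.comp w hd.differentiableAt

lemma exists_nhds_isIdempotentModPencil {a : A} {χ : WeakDual.characterSpace ℂ A → ℂ}
    (hχc : Continuous χ) (hχ : ∀ φ, χ φ = 0 ∨ χ φ = 1) {c : ℂ} {e : A}
    (he : ∀ η > 0, ∃ v, ‖e ^ 2 - e - pencil a c * v‖ < η) (hφe : ∀ φ, φ a = c → φ e = χ φ) :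
    ∃ U ∈ 𝓝 c, ∃ E, IsIdempotentModPencil a χ U E := by
  have hev : ∀ x : A, Continuous fun φ : WeakDual.characterSpace ℂ A => φ x := fun x =>
    (WeakDual.eval_continuous x).comp continuous_subtype_val
  obtain ⟨s, hs0, hs⟩ := exists_inv_sqrt_near_zero (A := A)
  have hsc : ∀ᶠ w in 𝓝 (0 : A), ‖s w - 1‖ * ‖(1 : A)‖ < 1 / 8 := by
    have h1 : ContinuousAt s 0 := hs.self_of_nhds.2.continuousAt
    have h2 : Tendsto (fun w => ‖s w - 1‖ * ‖(1 : A)‖) (𝓝 0) (𝓝 0) := by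
      have := ((h1.tendsto.sub_const 1).norm).mul_const ‖(1 : A)‖
      simpa [hs0] using this
    exact h2.eventually (gt_mem_nhds (by norm_num))
  obtain ⟨η, hη, hball⟩ := Metric.eventually_nhds_iff_ball.1 (hs.and hsc)
  obtain ⟨v, hv⟩ := he η hη
  let w : ℂ → A := fun z => e ^ 2 - e - pencil a z * v
  have hwd : Differentiable ℂ w := ((differentiable_pencil a).mul_const v).const_sub _
  have hw : ∀ᶠ z in 𝓝 c, w z ∈ ball (0 : A) η := by
    refine hwd.continuous.continuousAt.eventually (isOpen_ball.mem_nhds ?_)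
    simpa [w] using hv
  have hT : IsCompact ((fun φ : WeakDual.characterSpace ℂ A => φ a) ''
      {φ | 1 / 4 ≤ ‖φ e - χ φ‖}) :=
    (isClosed_le continuous_const ((hev e).sub hχc).norm).isCompact.image (hev a)
  have hcT : c ∉ (fun φ : WeakDual.characterSpace ℂ A => φ a) '' {φ | 1 / 4 ≤ ‖φ e - χ φ‖} := by
    rintro ⟨φ, hφ, hφc⟩
    have := hφe φ hφc
    simp only [mem_ofPred_eq, this, sub_self, norm_zero] at hφ
    norm_num at hφ
  have hcT' := hT.isClosed.isOpen_compl.mem_nhds hcT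
  obtain ⟨h, hh⟩ : ∃ h : A, 2 * h = 1 := ⟨algebraMap ℂ A (1 / 2), by
    rw [show (2 : A) = algebraMap ℂ A 2 from (map_ofNat _ 2).symm, ← map_mul]
    norm_num⟩
  have hφh : ∀ φ : WeakDual.characterSpace ℂ A, φ h = 1 / 2 := fun φ => by
    have h2 : φ (2 : A) = 2 := map_ofNat φ 2
    have := congrArg φ hh
    rw [map_mul, h2, map_one] at this
    linear_combination this / 2
  refine ⟨_, inter_mem hw hcT', fun z => h + (e - h) * s (w z), ?_⟩
  have hsd : DifferentiableOn ℂ (fun z => s (w z)) ({z | w z ∈ ball (0 : A) η} ∩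
      ((fun φ : WeakDual.characterSpace ℂ A => φ a) '' {φ | 1 / 4 ≤ ‖φ e - χ φ‖})ᶜ) :=
    fun z hz => ((hball _ hz.1).1.2.comp z hwd.differentiableAt).differentiableWithinAt
  have hm : IsPencilMultiple a ({z | w z ∈ ball (0 : A) η} ∩
      ((fun φ : WeakDual.characterSpace ℂ A => φ a) '' {φ | 1 / 4 ≤ ‖φ e - χ φ‖})ᶜ)
      (fun z => (h + (e - h) * s (w z)) ^ 2 - (h + (e - h) * s (w z))) := by
    refine ⟨fun z => v * s (w z) ^ 2, (hsd.pow 2).const_mul v, fun z hz => ?_⟩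
    have h1 := (hball _ hz.1).1.1
    have h2 : w z = e ^ 2 - e - pencil a z * v := rfl
    show (h + (e - h) * s (w z)) ^ 2 - (h + (e - h) * s (w z)) = pencil a z * (v * s (w z) ^ 2)
    generalize w z = x at h1 h2 ⊢
    generalize s x = y at h1 ⊢
    linear_combination h ^ 2 * h1 - y ^ 2 * h2 + (-y ^ 2 * e - y ^ 2 * x * (2 * h + 1) + h
      + y * (e - h)) * hh
  refine ⟨(hsd.const_mul _).const_add _, hm, fun φ hφ => ?_⟩
  have h01 : φ (h + (e - h) * s (w (φ a))) = 0 ∨ φ (h + (e - h) * s (w (φ a))) = 1 := by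
    have := hm.character_eq_zero φ hφ
    rw [map_sub, map_pow] at this
    have h3 : φ (h + (e - h) * s (w (φ a))) * (φ (h + (e - h) * s (w (φ a))) - 1) = 0 := by
      linear_combination this
    rcases mul_eq_zero.1 h3 with h3 | h3
    · exact Or.inl h3
    · exact Or.inr (sub_eq_zero.1 h3)
  have hb1 : ‖φ e - χ φ‖ < 1 / 4 := by
    by_contra hcon
    exact hφ.2 ⟨φ, not_lt.1 hcon, rfl⟩
  have hb2 : ‖φ (s (w (φ a))) - 1‖ < 1 / 8 := by
    refine lt_of_le_of_lt ?_ (hball _ hφ.1).2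
    have := AlgHom.norm_apply_le_self_mul_norm_one φ (s (w (φ a)) - 1)
    rwa [map_sub, map_one] at this
  have hval : φ (h + (e - h) * s (w (φ a))) - χ φ =
      (φ e - χ φ) * (φ (s (w (φ a))) - 1) + (φ e - χ φ) +
        (χ φ - 1 / 2) * (φ (s (w (φ a))) - 1) := by
    rw [map_add, map_mul, map_sub, hφh]
    ring
  have hb3 : ‖χ φ - 1 / 2‖ ≤ 1 / 2 := by
    rcases hχ φ with h | h <;> rw [h] <;> norm_num
  have hlt : ‖φ (h + (e - h) * s (w (φ a))) - χ φ‖ < 1 := by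
    rw [hval]
    refine (norm_add₃_le).trans_lt ?_
    rw [norm_mul, norm_mul]
    nlinarith [norm_nonneg (φ e - χ φ), norm_nonneg (φ (s (w (φ a))) - 1),
      norm_nonneg (χ φ - 1 / 2)]
  rcases h01 with h0 | h0 <;> rcases hχ φ with h1 | h1 <;> rw [h0, h1] at hlt ⊢ <;> norm_num at hlt

end LocalIdempotent

section Evaluation

open Real

variable {A : Type*} [NormedCommRing A] [NormedAlgebra ℂ A] [CompleteSpace A]

lemma circleIntegral_mul_left {f : ℂ → A} {c : ℂ} {R : ℝ} (hf : CircleIntegrable f c R) (x : A) :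
    (∮ z in C(c, R), x * f z) = x * ∮ z in C(c, R), f z := by
  have h := ContinuousLinearMap.intervalIntegral_comp_comm
    (ContinuousLinearMap.mul ℂ A x) hf.out
  simp only [ContinuousLinearMap.mul_apply', mul_smul_comm] at h
  exact h

lemma exists_const_sub_isPencilMultiple {a : A} {R : ℝ} (hR : ‖a‖ * ‖(1 : A)‖ < R) {E : ℂ → A}
    (hE : DifferentiableOn ℂ E (closedBall 0 R)) :
    ∃ e : A, IsPencilMultiple a (ball 0 R) (fun z => E z - e) := by
  have hR0 : 0 < R := lt_of_le_of_lt (by positivity) hR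
  have hres : ∀ z ∈ sphere (0 : ℂ) R, z ∈ resolventSet ℂ a := fun z hz =>
    spectrum.mem_resolventSet_of_norm_lt_mul (by rw [mem_sphere_zero_iff_norm.1 hz]; exact hR)
  have hcE : ContinuousOn E (sphere 0 R) := hE.continuousOn.mono sphere_subset_closedBall
  have hcR : ContinuousOn (resolvent a) (sphere (0 : ℂ) R) := fun z hz =>
    (spectrum.hasDerivAt_resolvent_const_left (hres z hz)).continuousAt.continuousWithinAt
  have hcF : ContinuousOn (fun ζ => E ζ * resolvent a ζ) (sphere 0 R) := hcE.mul hcR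
  have hI : CircleIntegrable (fun ζ => E ζ * resolvent a ζ) 0 R := hcF.circleIntegrable hR0.le
  refine ⟨(2 * π * Complex.I : ℂ)⁻¹ • ∮ ζ in C(0, R), E ζ * resolvent a ζ,
    fun z => (2 * π * Complex.I : ℂ)⁻¹ • ∮ ζ in C(0, R), (ζ - z)⁻¹ • (E ζ * resolvent a ζ),
    ?_, fun z hz => ?_⟩
  · have hp := hasFPowerSeriesOn_cauchy_integral (R := ⟨R, hR0.le⟩) hI hR0
    have := hp.differentiableOn
    rw [Metric.eball_coe (ε := ⟨R, hR0.le⟩)] at this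
    exact this
  · have hne : ∀ ζ ∈ sphere (0 : ℂ) R, ζ - z ≠ 0 := fun ζ hζ h => by
      rw [sub_eq_zero.1 h, mem_sphere] at hζ
      exact (mem_ball.1 hz).ne hζ
    have hI2 : CircleIntegrable (fun ζ => (ζ - z)⁻¹ • (E ζ * resolvent a ζ)) 0 R := by
      refine ContinuousOn.circleIntegrable hR0.le (ContinuousOn.smul ?_ hcF)
      exact ContinuousOn.inv₀ (by fun_prop) hne
    have hc := hE.circleIntegral_sub_inv_smul hz
    rw [mul_smul_comm, ← circleIntegral_mul_left hI2, sub_eq_iff_eq_add, ← smul_add,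
      ← circleIntegral.integral_add (by
        refine ContinuousOn.circleIntegrable hR0.le (continuousOn_const.mul
          (ContinuousOn.smul ?_ hcF))
        exact ContinuousOn.inv₀ (by fun_prop) hne) hI,
      circleIntegral.integral_congr (g := fun ζ => (ζ - z)⁻¹ • E ζ) hR0.le (fun ζ hζ => ?_),
      hc, inv_smul_smul₀ Complex.two_pi_I_ne_zero]
    have h1 := pencil_mul_resolvent (hres ζ hζ)
    have h2 : pencil a z = pencil a ζ - algebraMap ℂ A (ζ - z) := by
      rw [← pencil_sub_pencil a ζ z]; ring
    have h3 : algebraMap ℂ A (ζ - z)⁻¹ * algebraMap ℂ A (ζ - z) = 1 := by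
      rw [← map_mul, inv_mul_cancel₀ (hne ζ hζ), map_one]
    simp only [Algebra.smul_def]
    rw [h2]
    linear_combination algebraMap ℂ A (ζ - z)⁻¹ * E ζ * h1 - E ζ * resolvent a ζ * h3

lemma eq_zero_of_isPencilMultiple_const {a : A} {R : ℝ} (hR : ‖a‖ * ‖(1 : A)‖ < R) {y : A}
    (h : IsPencilMultiple a (ball 0 R) (fun _ => y)) : y = 0 := by
  obtain ⟨V, hV, h⟩ := h
  have hR0 : 0 < R := lt_of_le_of_lt (by positivity) hR
  have hres : ∀ z ∈ {z : ℂ | ‖a‖ * ‖(1 : A)‖ < ‖z‖}, z ∈ resolventSet ℂ a := fun z hz =>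
    spectrum.mem_resolventSet_of_norm_lt_mul hz
  have hQ : DifferentiableOn ℂ (fun z => resolvent a z * y) {z : ℂ | ‖a‖ * ‖(1 : A)‖ < ‖z‖} :=
    fun z hz => ((spectrum.hasDerivAt_resolvent_const_left (hres z hz)).differentiableAt.mul_const
      y).differentiableWithinAt
  obtain ⟨W, hW, hW1, hW2⟩ := exists_differentiableOn_union isOpen_ball
    (isOpen_lt continuous_const continuous_norm) hV hQ (fun z hz => by
      have h1 := pencil_mul_resolvent (hres z hz.2)
      have h2 := h z hz.1
      simp only at h2 ⊢
      linear_combination (-V z) * h1 - resolvent a z * h2)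
  have huniv : ball (0 : ℂ) R ∪ {z : ℂ | ‖a‖ * ‖(1 : A)‖ < ‖z‖} = univ := by
    refine eq_univ_of_forall fun z => ?_
    rcases lt_or_ge ‖z‖ R with hz | hz
    · exact Or.inl (by simpa using hz)
    · exact Or.inr (hR.trans_le hz)
  rw [huniv, differentiableOn_univ] at hW
  have hlim : Tendsto W (cocompact ℂ) (𝓝 0) := by
    rw [← Metric.cobounded_eq_cocompact]
    have h1 := (spectrum.resolvent_tendsto_cobounded (𝕜 := ℂ) a).mul_const y
    rw [zero_mul] at h1
    refine h1.congr' ?_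
    filter_upwards [(tendsto_norm_cobounded_atTop (E := ℂ)).eventually_gt_atTop
      (‖a‖ * ‖(1 : A)‖)] with z hz
    exact (hW2 hz).symm
  have h0 : (0 : ℂ) ∈ ball (0 : ℂ) R := mem_ball_self hR0
  refine (h 0 h0).trans ?_
  rw [← hW1 h0, hW.apply_eq_of_tendsto_cocompact 0 hlim, mul_zero]

lemma IsIdempotentModPencil.exists_idempotent {a : A} {χ : WeakDual.characterSpace ℂ A → ℂ}
    {E : ℂ → A} {R : ℝ} (hR : ‖a‖ * ‖(1 : A)‖ < R)
    (hE : IsIdempotentModPencil a χ (closedBall 0 R) E) :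
    ∃ e : A, e * e = e ∧ ∀ φ, φ e = χ φ := by
  obtain ⟨e, he⟩ := exists_const_sub_isPencilMultiple hR hE.1
  have hE' := hE.mono ball_subset_closedBall
  have hm := hE'.2.add (he.mul_left (g := fun z => -(E z + e - 1))
    ((hE'.1.add_const e).sub_const 1).neg)
  have h0 : e ^ 2 - e = 0 := eq_zero_of_isPencilMultiple_const hR (hm.congr fun z _ => by ring)
  refine ⟨e, by linear_combination h0, fun φ => ?_⟩
  have hφ : φ a ∈ ball (0 : ℂ) R := by
    rw [mem_ball_zero_iff]
    exact (AlgHom.norm_apply_le_self_mul_norm_one φ a).trans_lt hR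
  rw [← hE'.3 φ hφ]
  have := he.character_eq_zero φ hφ
  rw [map_sub, sub_eq_zero] at this
  exact this.symm

end Evaluation

section Shilov

universe u

open WeakDual

/-- Pullback of characters along a homomorphism of Banach algebras. -/
def characterPullback {A B : Type*} [NormedCommRing A] [NormedAlgebra ℂ A] [CompleteSpace A]
    [NormedCommRing B] [NormedAlgebra ℂ B] (f : A →ₐ[ℂ] B) (ψ : characterSpace ℂ B) :
    characterSpace ℂ A :=
  CharacterSpace.equivAlgHom.symm ((CharacterSpace.toAlgHom ψ).comp f)

lemma continuous_characterPullback {A B : Type*} [NormedCommRing A] [NormedAlgebra ℂ A]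
    [CompleteSpace A] [NormedCommRing B] [NormedAlgebra ℂ B] (f : A →ₐ[ℂ] B) :
    Continuous (characterPullback f) :=
  Continuous.subtype_mk (continuous_of_continuous_eval fun a =>
    (WeakDual.eval_continuous (f a)).comp continuous_subtype_val) _

/-- **Shilov's idempotent theorem** for clopen subsets of the character space separated by
finitely many elements. -/
theorem exists_idempotent_of_character (k : ℕ) :
    ∀ (A : Type u) [NormedCommRing A] [NormedAlgebra ℂ A] [CompleteSpace A] (a : Fin k → A)
      (χ : characterSpace ℂ A → ℂ), Continuous χ → (∀ φ, χ φ = 0 ∨ χ φ = 1) →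
      (∀ φ ψ : characterSpace ℂ A, (∀ i, φ (a i) = ψ (a i)) → χ φ = χ ψ) →
      ∃ e : A, e * e = e ∧ ∀ φ, φ e = χ φ := by
  induction k with
  | zero =>
    intro A _ _ _ a χ _ hχ hsep
    by_cases h : ∃ φ, χ φ = 1
    · obtain ⟨φ, hφ⟩ := h
      exact ⟨1, one_mul 1, fun ψ => by rw [map_one, ← hφ]; exact hsep φ ψ fun i => i.elim0⟩
    · refine ⟨0, zero_mul 0, fun ψ => ?_⟩
      rw [map_zero]
      exact ((hχ ψ).resolve_right fun h1 => h ⟨ψ, h1⟩).symm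
  | succ k ih =>
    intro A _ _ _ a χ hχc hχ hsep
    obtain ⟨R, hR⟩ := exists_gt (‖a 0‖ * ‖(1 : A)‖)
    have hR0 : 0 < R := lt_of_le_of_lt (by positivity) hR
    have hloc : ∀ c : ℂ, ∃ U ∈ 𝓝 c, ∃ E, IsIdempotentModPencil (a 0) χ U E := by
      intro c
      let I : Ideal A := (Ideal.span {pencil (a 0) c}).closure
      have hI : IsClosed (I : Set A) := by
        simp only [I, Ideal.coe_closure]
        exact isClosed_closure
      have : CompleteSpace (A ⧸ I) := inferInstance
      obtain ⟨q, hq, hqχ⟩ := ih (A ⧸ I) (fun i => Ideal.Quotient.mk I (a i.succ))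
        (fun ψ => χ (characterPullback (Ideal.Quotient.mkₐ ℂ I) ψ))
        (hχc.comp (continuous_characterPullback _)) (fun ψ => hχ _) (fun ψ₁ ψ₂ h => by
          have hp : ∀ ψ : characterSpace ℂ (A ⧸ I),
              characterPullback (Ideal.Quotient.mkₐ ℂ I) ψ (a 0) = c := by
            intro ψ
            have h0 : Ideal.Quotient.mk I (pencil (a 0) c) = 0 := by
              rw [Ideal.Quotient.eq_zero_iff_mem]
              exact subset_closure (Ideal.mem_span_singleton_self _)
            have h1 : characterPullback (Ideal.Quotient.mkₐ ℂ I) ψ (pencil (a 0) c) = 0 := by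
              have : ψ (Ideal.Quotient.mk I (pencil (a 0) c)) = 0 := by rw [h0, map_zero]
              exact this
            simp only [pencil, map_sub, AlgHomClass.commutes, Algebra.algebraMap_self,
              RingHom.id_apply, sub_eq_zero] at h1
            exact h1.symm
          refine hsep _ _ (Fin.cases ?_ fun i => h i)
          rw [hp, hp])
      obtain ⟨e, rfl⟩ := Ideal.Quotient.mk_surjective q
      refine exists_nhds_isIdempotentModPencil (e := e) hχc hχ ?_ ?_
      · intro η hη
        have hmem : e ^ 2 - e ∈ I := by
          rw [← Ideal.Quotient.eq_zero_iff_mem, map_sub, map_pow, sub_eq_zero, pow_two]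
          exact hq
        obtain ⟨x, hx, hd⟩ := Metric.mem_closure_iff.1 hmem η hη
        obtain ⟨v, rfl⟩ := Ideal.mem_span_singleton'.1 hx
        exact ⟨v, by rwa [dist_eq_norm, mul_comm v] at hd⟩
      · intro φ hφ
        have hker : ∀ x ∈ I, φ x = 0 := by
          intro x hx
          have hcl : IsClosed {x : A | φ x = 0} :=
            isClosed_eq (map_continuous φ) continuous_const
          refine closure_minimal (s := (Ideal.span {pencil (a 0) c} : Set A)) ?_ hcl hx
          intro y hy
          obtain ⟨v, rfl⟩ := Ideal.mem_span_singleton'.1 hy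
          simp [pencil, hφ, AlgHomClass.commutes]
        let ψ : characterSpace ℂ (A ⧸ I) := CharacterSpace.equivAlgHom.symm
          (Ideal.Quotient.liftₐ I (CharacterSpace.toAlgHom φ) hker)
        have hψ : characterPullback (Ideal.Quotient.mkₐ ℂ I) ψ = φ := by
          refine CharacterSpace.ext fun x => ?_
          rfl
        rw [← hψ]
        exact hqχ ψ
    obtain ⟨ε, hε, E, hE⟩ := exists_fatRect_isIdempotentModPencil (a := a 0) hχ
      (x := -R) (x' := R) (y := -R) (y' := R) (by linarith) (by linarith) fun z _ => hloc z
    refine (hE.mono ?_).exists_idempotent hR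
    intro z hz
    rw [mem_closedBall_zero_iff] at hz
    have h1 := abs_le.1 ((Complex.abs_re_le_norm z).trans hz)
    have h2 := abs_le.1 ((Complex.abs_im_le_norm z).trans hz)
    refine ⟨⟨?_, ?_⟩, ?_, ?_⟩ <;> linarith [h1.1, h1.2, h2.1, h2.2]

end Shilov

section SeveralVariables

variable {E : Type*} [NormedAddCommGroup E] [NormedSpace ℂ E]

lemma norm_fderiv_le_of_ball {f : E → ℂ} {x : E} {r M : ℝ} (hr : 0 < r)
    (hf : ∀ y ∈ closedBall x r, DifferentiableAt ℂ f y) (hM : ∀ y ∈ closedBall x r, ‖f y‖ ≤ M) :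
    ‖fderiv ℂ f x‖ ≤ M / r := by
  have hM0 : 0 ≤ M := (norm_nonneg _).trans (hM x (mem_closedBall_self hr.le))
  refine ContinuousLinearMap.opNorm_le_bound _ (by positivity) fun v => ?_
  rcases eq_or_ne v 0 with rfl | hv
  · simp
  have hv' : 0 < ‖v‖ := norm_pos_iff.2 hv
  have hmem : ∀ z ∈ closedBall (0 : ℂ) (r / ‖v‖), x + z • v ∈ closedBall x r := by
    intro z hz
    rw [mem_closedBall_zero_iff, le_div_iff₀ hv'] at hz
    simpa [norm_smul] using hz
  have hline : ∀ z : ℂ, HasDerivAt (fun z : ℂ => x + z • v) v z := fun z => by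
    simpa using ((hasDerivAt_id z).smul_const v).const_add x
  have hd : DifferentiableOn ℂ (fun z : ℂ => f (x + z • v)) (closedBall 0 (r / ‖v‖)) := fun z hz =>
    ((hf _ (hmem z hz)).comp z (hline z).differentiableAt).differentiableWithinAt
  have h1 := Complex.norm_deriv_le_of_forall_mem_sphere_norm_le (C := M) (div_pos hr hv')
    (hd.mono closure_ball_subset_closedBall).diffContOnCl
    (fun z hz => hM _ (hmem z (sphere_subset_closedBall hz)))
  have h2 : HasDerivAt (fun z : ℂ => f (x + z • v)) (fderiv ℂ f x v) 0 := by
    have h3 : HasFDerivAt f (fderiv ℂ f x) (x + (0 : ℂ) • v) := by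
      simpa using (hf x (mem_closedBall_self hr.le)).hasFDerivAt
    exact h3.comp_hasDerivAt 0 (hline 0)
  rw [h2.deriv] at h1
  calc ‖fderiv ℂ f x v‖ ≤ M / (r / ‖v‖) := h1
    _ = M / r * ‖v‖ := by field_simp

/-- **Weierstrass' theorem**: uniform limits of holomorphic functions are holomorphic. -/
lemma differentiableAt_of_tendstoUniformlyOn_ball {ι : Type*} {l : Filter ι} [l.NeBot]
    {F : ι → E → ℂ} {f : E → ℂ} {x : E} {r : ℝ} (hr : 0 < r)
    (hF : ∀ᶠ i in l, DifferentiableOn ℂ (F i) (ball x r)) (h : TendstoUniformlyOn F f l (ball x r)) :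
    DifferentiableAt ℂ f x := by
  have hsub : ∀ y ∈ ball x (r / 2), closedBall y (r / 4) ⊆ ball x r := fun y hy =>
    closedBall_subset_ball' (by rw [mem_ball] at hy; linarith)
  have hat : ∀ᶠ i in l, ∀ y ∈ ball x r, DifferentiableAt ℂ (F i) y :=
    hF.mono fun i hi y hy => (hi y hy).differentiableAt (isOpen_ball.mem_nhds hy)
  have hC : UniformCauchySeqOn (fun i => fderiv ℂ (F i)) l (ball x (r / 2)) := by
    intro u hu
    obtain ⟨ε, hε, hεu⟩ := Metric.mem_uniformity_dist.1 hu
    have h1 := h.uniformCauchySeqOn _ (Metric.dist_mem_uniformity (ε := ε * (r / 4) / 2)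
      (by positivity))
    filter_upwards [h1, hat.prod_mk hat] with i hi hd y hy
    refine hεu ?_
    have h2 := norm_fderiv_le_of_ball (f := fun y => F i.1 y - F i.2 y) (x := y) (r := r / 4)
      (M := ε * (r / 4) / 2) (by positivity)
      (fun z hz => (hd.1 z (hsub y hy hz)).sub (hd.2 z (hsub y hy hz)))
      (fun z hz => by
        have := hi z (hsub y hy hz)
        simp only [dist_eq_norm] at this
        exact this.le)
    have hy' : y ∈ ball x r := ball_subset_ball (by linarith) hy
    rw [fderiv_fun_sub (hd.1 y hy') (hd.2 y hy')] at h2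
    rw [dist_eq_norm]
    refine h2.trans_lt ?_
    rw [div_lt_iff₀ (by positivity)]
    nlinarith [mul_pos hε hr]
  have hlim : ∀ y ∈ ball x (r / 2), ∃ L : E →L[ℂ] ℂ, Tendsto (fun i => fderiv ℂ (F i) y) l (𝓝 L) :=
    fun y hy => cauchy_map_iff_exists_tendsto.1 (hC.cauchy_map hy)
  choose! g hg using hlim
  have hU := hC.tendstoUniformlyOn_of_tendsto hg
  have hmem : ball x (r / 2) ∈ 𝓝 x := ball_mem_nhds x (by positivity)
  have hsub' : ball x (r / 2) ⊆ ball x r := ball_subset_ball (by linarith)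
  refine (hasFDerivAt_of_tendstoUniformlyOnFilter (f := F) (g := f) (𝕜 := ℂ)
    (hU.tendstoUniformlyOnFilter.mono_right (le_principal_iff.2 hmem)) ?_ ?_).differentiableAt
  · filter_upwards [hat.prod_mk hmem] with i hi
    exact (hi.1 _ (hsub' hi.2)).hasFDerivAt
  · filter_upwards [hmem] with y hy
    exact h.tendsto_at (hsub' hy)

lemma norm_sub_sub_deriv_le {g : ℂ → ℂ} {r M : ℝ} (hr : 0 < r)
    (hg : DifferentiableOn ℂ g (ball 0 r)) (hgM : ∀ z ∈ ball (0 : ℂ) r, ‖g z‖ ≤ M) {h : ℂ}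
    (hh : ‖h‖ < r) :
    ‖g h - g 0 - h * deriv g 0‖ ≤ 2 * (2 * M / r) / r * ‖h‖ ^ 2 := by
  have h0 : ball (0 : ℂ) r ∈ 𝓝 0 := ball_mem_nhds 0 hr
  have h0' : (0 : ℂ) ∈ ball (0 : ℂ) r := mem_ball_self hr
  have hh' : h ∈ ball (0 : ℂ) r := mem_ball_zero_iff.2 hh
  have b1 : ∀ z ∈ ball (0 : ℂ) r, ‖dslope g 0 z‖ ≤ 2 * M / r := fun z hz =>
    Complex.norm_dslope_le_div_of_mapsTo_ball hg (fun w hw => by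
      rw [mem_closedBall, dist_eq_norm]
      linarith [norm_sub_le (g w) (g 0), hgM w hw, hgM 0 h0']) hz
  have hd1 : DifferentiableOn ℂ (dslope g 0) (ball 0 r) := (Complex.differentiableOn_dslope h0).2 hg
  have b2 : ‖dslope (dslope g 0) 0 h‖ ≤ 2 * (2 * M / r) / r :=
    Complex.norm_dslope_le_div_of_mapsTo_ball hd1 (fun w hw => by
      rw [mem_closedBall, dist_eq_norm]
      linarith [norm_sub_le (dslope g 0 w) (dslope g 0 0), b1 w hw, b1 0 h0']) hh'
  have e1 := sub_smul_dslope g 0 h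
  have e2 := sub_smul_dslope (dslope g 0) 0 h
  rw [dslope_same] at e2
  simp only [sub_zero, smul_eq_mul] at e1 e2
  have e3 : g h - g 0 - h * deriv g 0 = dslope (dslope g 0) 0 h * h ^ 2 := by
    linear_combination -e1 - h * e2
  rw [e3, norm_mul, norm_pow]
  gcongr

lemma eventually_norm_lt_nhds_zero {r : ℝ} (hr : 0 < r) : ∀ᶠ h : ℂ in 𝓝 0, ‖h‖ < r := by
  filter_upwards [ball_mem_nhds (0 : ℂ) hr] with h hh using mem_ball_zero_iff.1 hh

/-- Uniform second order Taylor estimate for a holomorphic function on a compact set. -/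
lemma exists_taylor_bound [ProperSpace E] {f : E → ℂ} {Ω S : Set E} (hΩ : IsOpen Ω)
    (hf : DifferentiableOn ℂ f Ω) (hS : IsCompact S) (hSΩ : S ⊆ Ω) (B : ℝ) :
    ∃ r > 0, ∃ C, ∀ x ∈ S, ∀ v : E, ‖v‖ ≤ B → ∀ h : ℂ, ‖h‖ < r → x + h • v ∈ Ω ∧
      ‖f (x + h • v) - f x - h * fderiv ℂ f x v‖ ≤ C * ‖h‖ ^ 2 := by
  obtain ⟨δ, hδ, hδΩ⟩ := hS.exists_cthickening_subset_open hΩ hSΩ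
  obtain ⟨M, hM⟩ := (hS.cthickening (r := δ)).exists_bound_of_continuousOn
    (hf.continuousOn.mono hδΩ)
  have hB : 0 < |B| + 1 := by positivity
  refine ⟨δ / (|B| + 1), by positivity,
    2 * (2 * M / (δ / (|B| + 1))) / (δ / (|B| + 1)), fun x hx v hv h hh => ?_⟩
  have hmem : ∀ z : ℂ, ‖z‖ < δ / (|B| + 1) → x + z • v ∈ cthickening δ S := by
    intro z hz
    refine mem_cthickening_of_dist_le _ x δ S hx ?_
    rw [lt_div_iff₀ hB] at hz
    rw [dist_eq_norm, add_sub_cancel_left, norm_smul]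
    nlinarith [norm_nonneg z, le_abs_self B]
  have hat : ∀ z : ℂ, ‖z‖ < δ / (|B| + 1) → DifferentiableAt ℂ f (x + z • v) := fun z hz =>
    hf.differentiableAt (hΩ.mem_nhds (hδΩ (hmem z hz)))
  have hline : ∀ z : ℂ, HasDerivAt (fun z : ℂ => x + z • v) v z := fun z => by
    simpa using ((hasDerivAt_id z).smul_const v).const_add x
  refine ⟨hδΩ (hmem h hh), ?_⟩
  have h1 := norm_sub_sub_deriv_le (g := fun z : ℂ => f (x + z • v)) (M := M)
    (r := δ / (|B| + 1)) (by positivity)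
    (fun z hz => ((hat z (mem_ball_zero_iff.1 hz)).comp z
      (hline z).differentiableAt).differentiableWithinAt)
    (fun z hz => hM _ (hmem z (mem_ball_zero_iff.1 hz))) hh
  have h2 : HasDerivAt (fun z : ℂ => f (x + z • v)) (fderiv ℂ f x v) 0 := by
    have h3 : HasFDerivAt f (fderiv ℂ f x) (x + (0 : ℂ) • v) := by
      simpa using (hat 0 (by simpa using (by positivity : 0 < δ / (|B| + 1)))).hasFDerivAt
    exact h3.comp_hasDerivAt 0 (hline 0)
  rw [h2.deriv] at h1
  simpa using h1

lemma DifferentiableOn.fderiv_apply_of_isOpen [ProperSpace E] {f : E → ℂ} {Ω : Set E}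
    (hΩ : IsOpen Ω) (hf : DifferentiableOn ℂ f Ω) (v : E) :
    DifferentiableOn ℂ (fun x => fderiv ℂ f x v) Ω := by
  intro x hx
  obtain ⟨R, hR, hRΩ⟩ := Metric.nhds_basis_closedBall.mem_iff.1 (hΩ.mem_nhds hx)
  obtain ⟨r, hr, C, hC⟩ := exists_taylor_bound hΩ hf (isCompact_closedBall x R) hRΩ ‖v‖
  refine (differentiableAt_of_tendstoUniformlyOn_ball (ι := ℂ) (l := 𝓝[≠] 0)
    (F := fun h y => h⁻¹ * (f (y + h • v) - f y)) hR ?_ ?_).differentiableWithinAt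
  · have hev : ∀ᶠ h : ℂ in 𝓝[≠] 0, ‖h‖ < r :=
      nhdsWithin_le_nhds (eventually_norm_lt_nhds_zero hr)
    filter_upwards [hev] with h hh y hy
    have hy' := ball_subset_closedBall hy
    have d1 : DifferentiableAt ℂ f (y + h • v) :=
      hf.differentiableAt (hΩ.mem_nhds (hC y hy' v le_rfl h hh).1)
    have d2 : DifferentiableAt ℂ (fun y => f (y + h • v)) y :=
      d1.comp y (differentiableAt_id.add_const _)
    exact ((d2.sub (hf.differentiableAt (hΩ.mem_nhds (hRΩ hy')))).const_mul
      h⁻¹).differentiableWithinAt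
  · rw [Metric.tendstoUniformlyOn_iff]
    intro ε hε
    have hev : ∀ᶠ h : ℂ in 𝓝[≠] 0, ‖h‖ < min r (ε / (|C| + 1)) :=
      nhdsWithin_le_nhds (eventually_norm_lt_nhds_zero (lt_min hr (by positivity)))
    filter_upwards [hev, self_mem_nhdsWithin] with h hh hne y hy
    have hne' : h ≠ 0 := hne
    have hpos : 0 < ‖h‖ := norm_pos_iff.2 hne'
    have h1 := (hC y (ball_subset_closedBall hy) v le_rfl h (hh.trans_le (min_le_left _ _))).2
    have h2 : fderiv ℂ f y v - h⁻¹ * (f (y + h • v) - f y) =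
        - h⁻¹ * (f (y + h • v) - f y - h * fderiv ℂ f y v) := by
      field_simp
      ring
    rw [dist_eq_norm, h2, norm_mul, norm_neg, norm_inv, inv_mul_lt_iff₀ hpos]
    refine h1.trans_lt ?_
    have h3 := hh.trans_le (min_le_right _ _)
    rw [lt_div_iff₀ (by positivity)] at h3
    nlinarith [le_abs_self C, sq_nonneg ‖h‖]

end SeveralVariables

section HolomorphicAlgebra

open WeakDual

variable {n : ℕ}

/-- The algebra of restrictions to `X` of holomorphic functions on `Ω`. -/
def holoRestrict (Ω X : Set (CSpace n)) : Subalgebra ℂ C(X, ℂ) where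
  carrier := {g | ∃ f : CSpace n → ℂ, DifferentiableOn ℂ f Ω ∧ ∀ x : X, g x = f x}
  mul_mem' := by
    rintro _ _ ⟨f₁, h₁, e₁⟩ ⟨f₂, h₂, e₂⟩
    exact ⟨fun x => f₁ x * f₂ x, h₁.mul h₂, fun x => by simp [e₁, e₂]⟩
  add_mem' := by
    rintro _ _ ⟨f₁, h₁, e₁⟩ ⟨f₂, h₂, e₂⟩
    exact ⟨fun x => f₁ x + f₂ x, h₁.add h₂, fun x => by simp [e₁, e₂]⟩
  algebraMap_mem' c := ⟨fun _ => c, differentiableOn_const c, fun _ => rfl⟩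

variable {Ω X : Set (CSpace n)} [CompactSpace X]

/-- The closure of the algebra of restrictions to `X` of holomorphic functions on `Ω`. -/
abbrev holoClosure (Ω X : Set (CSpace n)) [CompactSpace X] : Subalgebra ℂ C(X, ℂ) :=
  (holoRestrict Ω X).topologicalClosure

instance : CompleteSpace (holoClosure Ω X) :=
  (holoRestrict Ω X).isClosed_topologicalClosure.completeSpace_coe

/-- The restriction of a holomorphic function as an element of the closed algebra. -/
def holoElem (hX : X ⊆ Ω) (f : CSpace n → ℂ) (hf : DifferentiableOn ℂ f Ω) : holoClosure Ω X :=
  ⟨⟨fun x => f x, (hf.continuousOn.mono hX).domRestrict⟩,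
    (holoRestrict Ω X).le_topologicalClosure ⟨f, hf, fun _ => rfl⟩⟩

variable {hX : X ⊆ Ω} (φ : characterSpace ℂ (holoClosure Ω X))

lemma norm_character_le (g : holoClosure Ω X) : ‖φ g‖ ≤ ‖g‖ := by
  have h1 : ‖(1 : holoClosure Ω X)‖ ≤ 1 := by
    have : ‖(1 : C(X, ℂ))‖ ≤ 1 := by
      rw [ContinuousMap.norm_le _ zero_le_one]
      simp
    exact this
  calc ‖φ g‖ ≤ ‖g‖ * ‖(1 : holoClosure Ω X)‖ := AlgHom.norm_apply_le_self_mul_norm_one φ g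
    _ ≤ ‖g‖ * 1 := by gcongr
    _ = ‖g‖ := mul_one _

lemma norm_holoElem_le {f : CSpace n → ℂ} {hf : DifferentiableOn ℂ f Ω} {C : ℝ} (hC : 0 ≤ C)
    (h : ∀ x ∈ X, ‖f x‖ ≤ C) : ‖holoElem hX f hf‖ ≤ C := by
  change ‖(⟨fun x => f x, _⟩ : C(X, ℂ))‖ ≤ C
  rw [ContinuousMap.norm_le _ hC]
  exact fun x => h x x.2

lemma differentiable_coord (i : Fin n) : Differentiable ℂ (fun x : CSpace n => x i) :=
  (EuclideanSpace.proj i : CSpace n →L[ℂ] ℂ).differentiable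

/-- The point of `ℂⁿ` whose coordinates are the values of a character at the coordinates. -/
def characterPoint (hX : X ⊆ Ω) (φ : characterSpace ℂ (holoClosure Ω X)) : CSpace n :=
  WithLp.toLp 2 fun i => φ (holoElem hX (fun x => x i) (differentiable_coord i).differentiableOn)

lemma character_sum_coord_mul {g : Fin n → CSpace n → ℂ} (hg : ∀ i, DifferentiableOn ℂ (g i) Ω)
    {f : CSpace n → ℂ} (hf : DifferentiableOn ℂ f Ω)
    (h : ∀ x ∈ X, f x = ∑ i, (x i - characterPoint hX φ i) * g i x) :
    φ (holoElem hX f hf) = 0 := by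
  have e : holoElem hX f hf = ∑ i, (holoElem hX (fun x => x i)
      (differentiable_coord i).differentiableOn - algebraMap ℂ _ (characterPoint hX φ i)) *
        holoElem hX (g i) (hg i) := by
    refine Subtype.ext (ContinuousMap.ext fun x => ?_)
    simp only [AddSubmonoidClass.coe_finsetSum, ContinuousMap.sum_apply]
    exact h x x.2
  rw [e, map_sum]
  refine Finset.sum_eq_zero fun i _ => ?_
  rw [map_mul, map_sub, AlgHomClass.commutes]
  simp [characterPoint]

lemma clm_apply_eq_sum (L : CSpace n →L[ℂ] ℂ) (v : CSpace n) :
    L v = ∑ i, v i * L (EuclideanSpace.single i 1) := by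
  conv_lhs => rw [← (EuclideanSpace.basisFun (Fin n) ℂ).sum_repr v]
  simp

lemma characterPoint_mem (hΩ : IsOpen Ω) (hc : Convex ℝ Ω) : characterPoint hX φ ∈ Ω := by
  by_contra hp
  obtain ⟨L, hL⟩ := RCLike.geometric_hahn_banach_open_point (𝕜 := ℂ) hc hΩ hp
  set p := characterPoint hX φ
  have hne : ∀ x ∈ Ω, L (x - p) ≠ 0 := by
    intro x hx h0
    rw [map_sub, sub_eq_zero] at h0
    have := hL x hx
    rw [h0] at this
    exact lt_irrefl _ this
  have hd : DifferentiableOn ℂ (fun x => (L (x - p))⁻¹) Ω := fun x hx =>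
    ((L.differentiableAt.comp x (differentiableAt_id.sub_const p)).inv
      (hne x hx)).differentiableWithinAt
  have h1 := character_sum_coord_mul φ (hX := hX)
    (g := fun i x => L (EuclideanSpace.single i 1) * (L (x - p))⁻¹) (fun i => hd.const_mul _)
    (f := fun _ => 1) (differentiableOn_const 1) (fun x hx => by
      have h2 := clm_apply_eq_sum L (x - p)
      have h3 := mul_inv_cancel₀ (hne x (hX hx))
      refine h3.symm.trans ?_
      nth_rewrite 1 [h2]
      rw [Finset.sum_mul]
      refine Finset.sum_congr rfl fun i _ => ?_
      simp only [PiLp.sub_apply]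
      ring)
  have h2 : holoElem hX (fun _ => 1) (differentiableOn_const 1) = 1 := rfl
  rw [h2, map_one] at h1
  exact one_ne_zero h1

lemma eq_of_norm_sub_le_sq {u : ℝ → ℂ} {C r : ℝ} (hr : 0 < r)
    (h : ∀ t ∈ Icc (0 : ℝ) 1, ∀ s ∈ Icc (0 : ℝ) 1, |s - t| < r → ‖u s - u t‖ ≤ C * |s - t| ^ 2) :
    u 1 = u 0 := by
  have key : ∀ t ∈ Icc (0 : ℝ) 1, HasDerivWithinAt u 0 (Icc 0 1) t := by
    intro t ht
    rw [hasDerivWithinAt_iff_isLittleO]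
    have h1 : (fun s => u s - u t - (s - t) • (0 : ℂ)) =O[𝓝[Icc 0 1] t] fun s => (s - t) ^ 2 := by
      refine Asymptotics.IsBigO.of_bound C ?_
      have h2 : ∀ᶠ s in 𝓝[Icc 0 1] t, |s - t| < r :=
        nhdsWithin_le_nhds (Metric.ball_mem_nhds t hr)
      filter_upwards [h2, self_mem_nhdsWithin] with s hs hs'
      simpa using h t ht s hs' hs
    refine h1.trans_isLittleO ?_
    refine Asymptotics.IsLittleO.mono ?_ nhdsWithin_le_nhds
    have h3 : (fun x : ℝ => x ^ 2) =o[𝓝 0] fun x => x := by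
      simpa using Asymptotics.isLittleO_pow_pow (𝕜 := ℝ) (m := 1) (n := 2) (by norm_num)
    have h4 : Tendsto (fun s => s - t) (𝓝 t) (𝓝 0) := by
      have : Tendsto (fun s => s - t) (𝓝 t) (𝓝 (t - t)) := (continuous_id.sub continuous_const).tendsto t
      simpa using this
    exact h3.comp_tendsto h4
  have h1 := (convex_Icc (0 : ℝ) 1).norm_image_sub_le_of_norm_hasDerivWithin_le (C := 0) key
    (fun t _ => by simp) (left_mem_Icc.2 zero_le_one) (right_mem_Icc.2 zero_le_one)
  rw [zero_mul, norm_le_zero_iff, sub_eq_zero] at h1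
  exact h1

lemma character_eq_apply_characterPoint (hΩ : IsOpen Ω) (hc : Convex ℝ Ω) {f : CSpace n → ℂ}
    (hf : DifferentiableOn ℂ f Ω) : φ (holoElem hX f hf) = f (characterPoint hX φ) := by
  have hp := characterPoint_mem φ (hX := hX) hΩ hc
  set p := characterPoint hX φ with hpdef
  have hXc : IsCompact X := isCompact_iff_compactSpace.2 inferInstance
  have hmem : ∀ t ∈ Icc (0 : ℝ) 1, ∀ x ∈ Ω, p + (t : ℂ) • (x - p) ∈ Ω := fun t ht x hx => by
    have := hc.add_smul_sub_mem hp hx ht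
    rwa [← Complex.coe_smul] at this
  have haff : ∀ t : ℝ, Differentiable ℂ (fun x : CSpace n => p + (t : ℂ) • (x - p)) := fun t =>
    ((differentiable_id.sub_const p).const_smul (t : ℂ)).const_add p
  have hcomp : ∀ (g : CSpace n → ℂ), DifferentiableOn ℂ g Ω → ∀ t ∈ Icc (0 : ℝ) 1,
      DifferentiableOn ℂ (fun x => g (p + (t : ℂ) • (x - p))) Ω := fun g hg t ht =>
    hg.comp (haff t).differentiableOn (hmem t ht)
  let S : Set (CSpace n) := (fun q : ℝ × CSpace n => p + (q.1 : ℂ) • (q.2 - p)) '' (Icc 0 1 ×ˢ X)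
  have hS : IsCompact S := (isCompact_Icc.prod hXc).image (by fun_prop)
  have hSΩ : S ⊆ Ω := by
    rintro _ ⟨⟨t, x⟩, ⟨ht, hx⟩, rfl⟩
    exact hmem t ht x (hX hx)
  obtain ⟨B, hB⟩ := (hXc.image (continuous_id.sub continuous_const :
    Continuous fun x : CSpace n => x - p)).isBounded.exists_norm_le
  obtain ⟨r, hr, C, hC⟩ := exists_taylor_bound hΩ hf hS hSΩ B
  let u : ℝ → ℂ := fun t => if ht : t ∈ Icc (0 : ℝ) 1 then φ (holoElem hX _ (hcomp f hf t ht)) else 0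
  have hu := eq_of_norm_sub_le_sq (u := u) (C := |C|) hr ?_
  · have e1 : u 1 = φ (holoElem hX f hf) := by
      simp only [u, dif_pos (right_mem_Icc.2 zero_le_one)]
      congr 1
      refine Subtype.ext (ContinuousMap.ext fun x => ?_)
      change f (p + ((1 : ℝ) : ℂ) • (x - p)) = f x
      simp
    have e0 : u 0 = f p := by
      simp only [u, dif_pos (left_mem_Icc.2 zero_le_one)]
      have : holoElem hX _ (hcomp f hf 0 (left_mem_Icc.2 zero_le_one)) = algebraMap ℂ _ (f p) := by
        refine Subtype.ext (ContinuousMap.ext fun x => ?_)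
        change f (p + ((0 : ℝ) : ℂ) • (x - p)) = f p
        simp
      rw [this, AlgHomClass.commutes]
      rfl
    rw [← e1, ← e0, hu]
  · intro t ht s hs hst
    have hD : ∀ i, DifferentiableOn ℂ (fun x => fderiv ℂ f (p + (t : ℂ) • (x - p))
        (EuclideanSpace.single i 1)) Ω := fun i =>
      hcomp _ (hf.fderiv_apply_of_isOpen hΩ (EuclideanSpace.single i 1)) t ht
    let D : CSpace n → ℂ := fun x => ∑ i, (x i - p i) *
      fderiv ℂ f (p + (t : ℂ) • (x - p)) (EuclideanSpace.single i 1)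
    have hDd : DifferentiableOn ℂ D Ω := DifferentiableOn.fun_sum fun i _ =>
      ((differentiable_coord i).sub_const _).differentiableOn.mul (hD i)
    have hD0 : φ (holoElem hX D hDd) = 0 := character_sum_coord_mul φ hD hDd fun x _ => rfl
    have hDe : ∀ x, D x = fderiv ℂ f (p + (t : ℂ) • (x - p)) (x - p) := fun x => by
      rw [clm_apply_eq_sum]
      simp [D]
    have hG : DifferentiableOn ℂ (fun x => f (p + (s : ℂ) • (x - p)) - f (p + (t : ℂ) • (x - p))
        - ((s - t : ℝ) : ℂ) * D x) Ω :=
      ((hcomp f hf s hs).sub (hcomp f hf t ht)).sub (hDd.const_mul _)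
    have e : holoElem hX _ hG = holoElem hX _ (hcomp f hf s hs) - holoElem hX _ (hcomp f hf t ht)
        - algebraMap ℂ _ ((s - t : ℝ) : ℂ) * holoElem hX D hDd := rfl
    have e2 : φ (holoElem hX _ hG) = u s - u t := by
      rw [e, map_sub, map_sub, map_mul, hD0, mul_zero, sub_zero]
      simp only [u, dif_pos hs, dif_pos ht]
    rw [← e2]
    refine (norm_character_le φ _).trans (norm_holoElem_le (by positivity) fun x hx => ?_)
    have h1 := (hC (p + (t : ℂ) • (x - p)) ⟨(t, x), ⟨ht, hx⟩, rfl⟩ (x - p)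
      (hB _ ⟨x, hx, rfl⟩) ((s - t : ℝ) : ℂ) (by simpa [-Complex.ofReal_sub] using hst)).2
    have h2 : p + (t : ℂ) • (x - p) + ((s - t : ℝ) : ℂ) • (x - p) = p + (s : ℂ) • (x - p) := by
      push_cast
      module
    rw [h2] at h1
    rw [hDe]
    refine h1.trans ?_
    rw [Complex.norm_real, Real.norm_eq_abs]
    gcongr
    exact le_abs_self C

lemma characterPoint_mem_OHull (hΩ : IsOpen Ω) (hc : Convex ℝ Ω) :
    characterPoint hX φ ∈ OHull Ω X := by
  refine ⟨characterPoint_mem φ hΩ hc, fun f hf => ?_⟩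
  rw [← character_eq_apply_characterPoint φ (hX := hX) hΩ hc hf]
  refine (norm_character_le φ _).trans ?_
  change ‖(⟨fun x => f x, _⟩ : C(X, ℂ))‖ ≤ _
  rw [ContinuousMap.norm_eq_iSup_norm]
  rfl

lemma continuous_characterPoint (hX : X ⊆ Ω) :
    Continuous (characterPoint hX : characterSpace ℂ (holoClosure Ω X) → CSpace n) :=
  (PiLp.continuous_toLp 2 _).comp <| continuous_pi fun _ =>
    (WeakDual.eval_continuous _).comp continuous_subtype_val

/-- Evaluation at a point as a character. -/
def evalCharacter (Ω : Set (CSpace n)) (x : X) : characterSpace ℂ (holoClosure Ω X) :=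
  CharacterSpace.equivAlgHom.symm
    ((ContinuousMap.evalAlgHom ℂ ℂ x).comp (holoClosure Ω X).val)

lemma evalCharacter_apply (x : X) (g : holoClosure Ω X) : evalCharacter Ω x g = g.1 x := rfl

lemma characterPoint_evalCharacter (x : X) : characterPoint hX (evalCharacter Ω x) = x := by
  ext i
  rfl

/-- Disjoint compact pieces of a holomorphically convex compact set can be separated by
holomorphic functions. -/
theorem exists_holomorphic_separation {Ω K L : Set (CSpace n)} (hΩ : IsOpen Ω) (hc : Convex ℝ Ω)
    (hK : IsCompact K) (hL : IsCompact L) (hKL : Disjoint K L) (hKΩ : K ⊆ Ω) (hLΩ : L ⊆ Ω)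
    (hH : OHull Ω (K ∪ L) = K ∪ L) {η : ℝ} (hη : 0 < η) :
    ∃ f : CSpace n → ℂ, DifferentiableOn ℂ f Ω ∧ (∀ x ∈ K, ‖f x‖ < η) ∧
      ∀ x ∈ L, ‖f x - 1‖ < η := by
  have : CompactSpace ↥(K ∪ L) := isCompact_iff_compactSpace.1 (hK.union hL)
  have hX : K ∪ L ⊆ Ω := union_subset hKΩ hLΩ
  have hcl : IsClopen (characterPoint hX ⁻¹' L) := by
    refine ⟨hL.isClosed.preimage (continuous_characterPoint hX), ?_⟩
    have : characterPoint hX ⁻¹' L = (characterPoint hX ⁻¹' K)ᶜ := by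
      ext φ
      have h1 := characterPoint_mem_OHull φ (hX := hX) hΩ hc
      rw [hH] at h1
      refine ⟨fun h h' => Set.disjoint_left.1 hKL h' h, fun h => h1.resolve_left h⟩
    rw [this]
    exact (hK.isClosed.preimage (continuous_characterPoint hX)).isOpen_compl
  classical
  obtain ⟨e, -, he⟩ := exists_idempotent_of_character n (holoClosure Ω (K ∪ L))
    (fun i => holoElem hX (fun x => x i) (differentiable_coord i).differentiableOn)
    (fun φ => (characterPoint hX ⁻¹' L).indicator 1 φ)
    (hcl.continuous_indicator continuous_one)
    (fun φ => by by_cases h : φ ∈ characterPoint hX ⁻¹' L <;> simp [h])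
    (fun φ ψ h => by
      have : characterPoint hX φ = characterPoint hX ψ := by
        ext i
        exact h i
      simp only [Set.indicator, mem_preimage, this, Pi.one_apply])
  obtain ⟨g, ⟨f, hf, hgf⟩, hg⟩ := Metric.mem_closure_iff.1
    ((Subalgebra.topologicalClosure_coe (holoRestrict Ω (K ∪ L))).subset e.2) η hη
  have hval : ∀ x : ↥(K ∪ L), e.1 x = L.indicator 1 (x : CSpace n) := fun x => by
    rw [← evalCharacter_apply, he]
    simp only [Set.indicator, mem_preimage, characterPoint_evalCharacter]
    rfl
  have hlt : ∀ x : ↥(K ∪ L), ‖f x - L.indicator 1 (x : CSpace n)‖ < η := fun x => by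
    rw [← hval, ← hgf, ← dist_eq_norm, dist_comm]
    exact (ContinuousMap.dist_apply_le_dist x).trans_lt hg
  refine ⟨f, hf, fun x hx => ?_, fun x hx => ?_⟩
  · have := hlt ⟨x, Or.inl hx⟩
    rwa [Set.indicator_of_notMem (Set.disjoint_left.1 hKL hx), sub_zero] at this
  · have := hlt ⟨x, Or.inr hx⟩
    rwa [Set.indicator_of_mem hx] at this

end HolomorphicAlgebra

section Hull

variable {n : ℕ} {Ω K L : Set (CSpace n)}

lemma norm_le_of_mem_OHull {x : CSpace n} (hx : x ∈ OHull Ω K) {f : CSpace n → ℂ}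
    (hf : DifferentiableOn ℂ f Ω) {C : ℝ} (hC : 0 ≤ C) (h : ∀ y ∈ K, ‖f y‖ ≤ C) : ‖f x‖ ≤ C :=
  (hx.2 f hf).trans (Real.iSup_le (fun y => h y y.2) hC)

lemma norm_le_iSup_of_isCompact (hK : IsCompact K) (hKΩ : K ⊆ Ω) {f : CSpace n → ℂ}
    (hf : DifferentiableOn ℂ f Ω) {x : CSpace n} (hx : x ∈ K) : ‖f x‖ ≤ ⨆ y : K, ‖f ↑y‖ := by
  obtain ⟨C, hC⟩ := hK.exists_bound_of_continuousOn (hf.continuousOn.mono hKΩ)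
  exact le_ciSup (f := fun y : K => ‖f ↑y‖) ⟨C, by rintro _ ⟨y, rfl⟩; exact hC y y.2⟩ ⟨x, hx⟩

lemma subset_OHull (hK : IsCompact K) (hKΩ : K ⊆ Ω) : K ⊆ OHull Ω K := fun _ hx =>
  ⟨hKΩ hx, fun _ hf => norm_le_iSup_of_isCompact hK hKΩ hf hx⟩

lemma exists_small_of_notMem_OHull (hK : IsCompact K) (hKΩ : K ⊆ Ω) {x : CSpace n} (hxΩ : x ∈ Ω)
    (hx : x ∉ OHull Ω K) {η : ℝ} (hη : 0 < η) :
    ∃ f : CSpace n → ℂ, DifferentiableOn ℂ f Ω ∧ f x = 1 ∧ ∀ y ∈ K, ‖f y‖ < η := by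
  have hx' : ∃ f : CSpace n → ℂ, DifferentiableOn ℂ f Ω ∧ ⨆ y : K, ‖f ↑y‖ < ‖f x‖ := by
    by_contra! h
    exact hx ⟨hxΩ, h⟩
  obtain ⟨f, hf, hlt⟩ := hx'
  have h0 : 0 ≤ ⨆ y : K, ‖f ↑y‖ := Real.iSup_nonneg fun _ => norm_nonneg _
  have hpos : 0 < ‖f x‖ := h0.trans_lt hlt
  obtain ⟨N, hN⟩ := exists_pow_lt_of_lt_one hη ((div_lt_one hpos).2 hlt)
  refine ⟨fun y => (f y / f x) ^ N, DifferentiableOn.pow (f := fun y => f y / f x)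
    (by simpa only [div_eq_mul_inv] using hf.mul_const _) N, ?_, fun y hy => ?_⟩
  · simp only [div_self (norm_pos_iff.1 hpos), one_pow]
  · rw [norm_pow, norm_div]
    refine lt_of_le_of_lt ?_ hN
    gcongr
    exact norm_le_iSup_of_isCompact hK hKΩ hf hy

lemma OHull_eq_of_convex (hK : IsCompact K) (hKΩ : K ⊆ Ω) (hc : Convex ℝ K) : OHull Ω K = K := by
  refine Subset.antisymm (fun x hx => ?_) (subset_OHull hK hKΩ)
  by_contra hxK
  obtain ⟨f, u, hfu, hux⟩ := RCLike.geometric_hahn_banach_closed_point (𝕜 := ℂ) hc hK.isClosed hxK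
  have h := norm_le_of_mem_OHull hx (f := fun y => Complex.exp (f y))
    f.differentiable.cexp.differentiableOn (Real.exp_nonneg u) fun y hy => by
      rw [Complex.norm_exp]
      exact Real.exp_le_exp.2 (hfu y hy).le
  rw [Complex.norm_exp, Real.exp_le_exp] at h
  exact absurd hux (not_lt.2 h)

lemma exists_compact_convex_between {E : Type*} [NormedAddCommGroup E] [NormedSpace ℝ E]
    [FiniteDimensional ℝ E] {U S : Set E} (hU : IsOpen U) (hc : Convex ℝ U) (hS : IsCompact S)
    (hSU : S ⊆ U) : ∃ T : Set E, IsCompact T ∧ Convex ℝ T ∧ S ⊆ T ∧ T ⊆ U := by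
  classical
  have h : ∀ x ∈ S, ∃ u : Finset E, x ∈ interior (convexHull ℝ (u : Set E)) ∧
      convexHull ℝ (u : Set E) ⊆ U := fun x hx => by
    obtain ⟨u, hu, hu'⟩ :=
      (convex_singleton (𝕜 := ℝ) x).exists_subset_interior_convexHull_finset_of_isCompact
        isCompact_singleton (by rw [nhdsSet_singleton]; exact hU.mem_nhds (hSU hx))
    exact ⟨u, singleton_subset_iff.1 hu, hu'⟩
  choose! u hu hu' using h
  obtain ⟨t, ht, hcov⟩ := hS.elim_nhds_subcover (fun x => interior (convexHull ℝ (u x : Set E)))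
    fun x hx => isOpen_interior.mem_nhds (hu x hx)
  refine ⟨convexHull ℝ (t.biUnion u : Set E), (Finset.finite_toSet _).isCompact_convexHull ℝ,
    convex_convexHull ℝ _, fun x hx => ?_, convexHull_min (fun y hy => ?_) hc⟩
  · obtain ⟨z, hz, hxz⟩ := mem_iUnion₂.1 (hcov hx)
    exact convexHull_mono (Finset.coe_subset.2 (Finset.subset_biUnion_of_mem u hz))
      (interior_subset hxz)
  · obtain ⟨z, hz, hyz⟩ := Finset.mem_biUnion.1 (Finset.mem_coe.1 hy)
    exact hu' z (ht z hz) (subset_convexHull ℝ _ hyz)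

lemma OHull_image_eq {τ σ : CSpace n → CSpace n} (hτ : MapsTo τ Ω Ω)
    (hσd : DifferentiableOn ℂ σ Ω) (hσ : MapsTo σ Ω Ω) (hστ : ∀ x ∈ Ω, σ (τ x) = x)
    (hτσ : ∀ x ∈ Ω, τ (σ x) = x) (hτd : DifferentiableOn ℂ τ Ω) (hK : IsCompact K) (hKΩ : K ⊆ Ω)
    (hH : OHull Ω K = K) : OHull Ω (τ '' K) = τ '' K := by
  refine Subset.antisymm (fun x hx => ?_) (subset_OHull (hK.image_of_continuousOn
    (hτd.continuousOn.mono hKΩ)) (hτ.mono_left hKΩ).image_subset)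
  have h : σ x ∈ OHull Ω K := ⟨hσ hx.1, fun f hf => by
    refine norm_le_of_mem_OHull hx (f := f ∘ σ) (hf.comp hσd hσ)
      (Real.iSup_nonneg fun _ => norm_nonneg _) ?_
    rintro _ ⟨y, hy, rfl⟩
    simp only [Function.comp_apply, hστ y (hKΩ hy)]
    exact norm_le_iSup_of_isCompact hK hKΩ hf hy⟩
  rw [hH] at h
  exact ⟨σ x, h, hτσ x hx.1⟩

lemma OHull_union_eq_of_separation (hK : IsCompact K) (hKΩ : K ⊆ Ω) (hL : IsCompact L)
    (hLΩ : L ⊆ Ω) (hHK : OHull Ω K = K) (hHL : OHull Ω L = L)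
    (hsep : ∀ η : ℝ, 0 < η → ∃ f : CSpace n → ℂ, DifferentiableOn ℂ f Ω ∧ (∀ x ∈ K, ‖f x‖ < η) ∧
      ∀ x ∈ L, ‖f x - 1‖ < η) : OHull Ω (K ∪ L) = K ∪ L := by
  refine Subset.antisymm (fun p hp => ?_)
    (subset_OHull (hK.union hL) (union_subset hKΩ hLΩ))
  by_contra hpKL
  rw [mem_union, not_or] at hpKL
  obtain ⟨f₁, hf₁, h₁p, h₁⟩ := exists_small_of_notMem_OHull hK hKΩ hp.1 (hHK.symm ▸ hpKL.1)
    (by norm_num : (0 : ℝ) < 1 / 4)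
  obtain ⟨f₂, hf₂, h₂p, h₂⟩ := exists_small_of_notMem_OHull hL hLΩ hp.1 (hHL.symm ▸ hpKL.2)
    (by norm_num : (0 : ℝ) < 1 / 4)
  obtain ⟨M₁, hM₁⟩ := hL.exists_bound_of_continuousOn (hf₁.continuousOn.mono hLΩ)
  obtain ⟨M₂, hM₂⟩ := hK.exists_bound_of_continuousOn (hf₂.continuousOn.mono hKΩ)
  set M := max 1 (max M₁ M₂)
  have hM : 1 ≤ M := le_max_left _ _
  have hη : 0 < 1 / (8 * M) := by positivity
  obtain ⟨g, hg, hgK, hgL⟩ := hsep _ hη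
  have hηM : 1 / (8 * M) * M = 1 / 8 := by field_simp
  have hη1 : 1 / (8 * M) ≤ 1 / 8 := by
    gcongr
    linarith
  have hb := norm_le_of_mem_OHull hp (f := fun x => (1 - g x) * f₁ x + g x * f₂ x)
    (((hg.const_sub 1).mul hf₁).add (hg.mul hf₂)) (by norm_num : (0 : ℝ) ≤ 1 / 2) ?_
  · simp only [h₁p, h₂p] at hb
    norm_num at hb
  · rintro x (hx | hx)
    · have e1 : ‖1 - g x‖ ≤ 9 / 8 := (norm_sub_le _ _).trans (by
        rw [norm_one]
        linarith [hgK x hx])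
      have e2 : ‖g x‖ * ‖f₂ x‖ ≤ 1 / (8 * M) * M :=
        mul_le_mul (hgK x hx).le ((hM₂ x hx).trans ((le_max_right _ _).trans (le_max_right _ _)))
          (norm_nonneg _) hη.le
      have e3 : ‖1 - g x‖ * ‖f₁ x‖ ≤ 9 / 8 * (1 / 4) :=
        mul_le_mul e1 (h₁ x hx).le (norm_nonneg _) (by norm_num)
      refine (norm_add_le _ _).trans ?_
      rw [norm_mul, norm_mul]
      linarith
    · have e1 : ‖g x‖ ≤ 9 / 8 := by
        have : g x = 1 + (g x - 1) := by ring
        rw [this]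
        refine (norm_add_le _ _).trans ?_
        rw [norm_one]
        linarith [hgL x hx]
      have e2 : ‖1 - g x‖ * ‖f₁ x‖ ≤ 1 / (8 * M) * M :=
        mul_le_mul (by rw [norm_sub_rev]; exact (hgL x hx).le)
          ((hM₁ x hx).trans ((le_max_left _ _).trans (le_max_right _ _)))
          (norm_nonneg _) hη.le
      have e3 : ‖g x‖ * ‖f₂ x‖ ≤ 9 / 8 * (1 / 4) :=
        mul_le_mul e1 (h₂ x hx).le (norm_nonneg _) (by norm_num)
      refine (norm_add_le _ _).trans ?_
      rw [norm_mul, norm_mul]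
      linarith

lemma norm_smoothstep_le {z : ℂ} (hz : ‖z‖ ≤ 1 / 8) : ‖3 * z ^ 2 - 2 * z ^ 3‖ ≤ ‖z‖ / 2 := by
  have h : 3 * z ^ 2 - 2 * z ^ 3 = z * (z * (3 - 2 * z)) := by ring
  have h1 : ‖3 - 2 * z‖ ≤ 4 := (norm_sub_le _ _).trans (by
    rw [norm_mul]
    norm_num
    linarith)
  rw [h, norm_mul, norm_mul]
  have h2 : ‖z‖ * ‖3 - 2 * z‖ ≤ 1 / 8 * 4 := by gcongr
  nlinarith [norm_nonneg z]

lemma exists_separation_of_rough {g : CSpace n → ℂ} (hg : DifferentiableOn ℂ g Ω)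
    (hK : ∀ x ∈ K, ‖g x‖ ≤ 1 / 8) (hL : ∀ x ∈ L, ‖g x - 1‖ ≤ 1 / 8) {η : ℝ} (hη : 0 < η) :
    ∃ f : CSpace n → ℂ, DifferentiableOn ℂ f Ω ∧ (∀ x ∈ K, ‖f x‖ < η) ∧
      ∀ x ∈ L, ‖f x - 1‖ < η := by
  have key : ∀ N : ℕ, ∃ f : CSpace n → ℂ, DifferentiableOn ℂ f Ω ∧
      (∀ x ∈ K, ‖f x‖ ≤ 1 / 8 * (1 / 2) ^ N) ∧ ∀ x ∈ L, ‖f x - 1‖ ≤ 1 / 8 * (1 / 2) ^ N := by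
    intro N
    induction N with
    | zero => exact ⟨g, hg, by simpa using hK, by simpa using hL⟩
    | succ N ih =>
      obtain ⟨f, hf, h₁, h₂⟩ := ih
      have hle : (1 / 8 : ℝ) * (1 / 2) ^ N ≤ 1 / 8 :=
        mul_le_of_le_one_right (by norm_num) (pow_le_one₀ (by norm_num) (by norm_num))
      refine ⟨fun x => 3 * f x ^ 2 - 2 * f x ^ 3,
        ((hf.pow 2).const_mul 3).sub ((hf.pow 3).const_mul 2), fun x hx => ?_, fun x hx => ?_⟩
      · refine (norm_smoothstep_le ((h₁ x hx).trans hle)).trans ?_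
        rw [pow_succ]
        linarith [h₁ x hx]
      · have h3 : ‖1 - f x‖ ≤ 1 / 8 * (1 / 2) ^ N := by
          rw [norm_sub_rev]
          exact h₂ x hx
        have h4 : 3 * f x ^ 2 - 2 * f x ^ 3 - 1 = -(3 * (1 - f x) ^ 2 - 2 * (1 - f x) ^ 3) := by
          ring
        rw [h4, norm_neg]
        refine (norm_smoothstep_le (h3.trans hle)).trans ?_
        rw [pow_succ]
        linarith
  obtain ⟨N, hN⟩ := exists_pow_lt_of_lt_one hη (by norm_num : (1 / 2 : ℝ) < 1)
  obtain ⟨f, hf, h₁, h₂⟩ := key N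
  have h5 : (1 / 8 : ℝ) * (1 / 2) ^ N < η := by
    have : (0 : ℝ) < (1 / 2) ^ N := by positivity
    linarith
  exact ⟨f, hf, fun x hx => (h₁ x hx).trans_lt h5, fun x hx => (h₂ x hx).trans_lt h5⟩

end Hull

section Universality

variable {n : ℕ} {Ω : Set (CSpace n)}

lemma isClosed_OFun (hΩ : IsOpen Ω) : IsClosed (OFun Ω) := by
  classical
  rw [isClosed_iff_clusterPt]
  intro f hf
  have : (𝓝 f ⊓ 𝓟 (OFun Ω)).NeBot := hf
  set l := 𝓝 f ⊓ 𝓟 (OFun Ω)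
  let ext : C(Ω, ℂ) → CSpace n → ℂ := fun g x => if hx : x ∈ Ω then g ⟨x, hx⟩ else 0
  have hext : ∀ g (x : Ω), ext g x = g x := fun g x => dif_pos x.2
  refine ⟨ext f, fun x hx => ?_, fun x => (hext f x).symm⟩
  obtain ⟨r, hr, hrΩ⟩ := nhds_basis_closedBall.mem_iff.1 (hΩ.mem_nhds hx)
  have hcomp : IsCompact ((↑) ⁻¹' closedBall x r : Set Ω) := by
    rw [Subtype.isCompact_iff, Subtype.image_preimage_coe, inter_eq_right.2 hrΩ]
    exact isCompact_closedBall x r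
  have ht := ContinuousMap.tendsto_iff_forall_isCompact_tendstoUniformlyOn.1
    (tendsto_id'.2 (inf_le_left : l ≤ 𝓝 f)) _ hcomp
  have ht' : TendstoUniformlyOn ext (ext f) l (ball x r) := by
    rw [Metric.tendstoUniformlyOn_iff] at ht ⊢
    intro ε hε
    filter_upwards [ht ε hε] with g hg y hy
    have hyΩ := hrΩ (ball_subset_closedBall hy)
    have hy' : (⟨y, hyΩ⟩ : Ω) ∈ (Subtype.val ⁻¹' closedBall x r : Set Ω) :=
      mem_preimage.2 (ball_subset_closedBall hy)
    have h1 : dist (f ⟨y, hyΩ⟩) (g ⟨y, hyΩ⟩) < ε := hg ⟨y, hyΩ⟩ hy'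
    rwa [← hext f, ← hext g] at h1
  refine (differentiableAt_of_tendstoUniformlyOn_ball hr ?_ ht').differentiableWithinAt
  have hl : OFun Ω ∈ l := mem_inf_of_right (mem_principal_self _)
  filter_upwards [hl] with g hg
  obtain ⟨g', hg', hgg'⟩ := hg
  refine (hg'.mono (ball_subset_closedBall.trans hrΩ)).congr fun y hy => ?_
  have hyΩ := hrΩ (ball_subset_closedBall hy)
  exact (hext g ⟨y, hyΩ⟩).trans (hgg' _)

lemma nhds_basis_compactConvergence {X : Type*} [TopologicalSpace X] (f : C(X, ℂ)) :
    (𝓝 f).HasBasis (fun p : Set X × ℝ => IsCompact p.1 ∧ 0 < p.2)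
      fun p => {g | ∀ x ∈ p.1, ‖g x - f x‖ < p.2} := by
  have h := nhds_basis_uniformity
    (Metric.uniformity_basis_dist (α := ℂ)).compactConvergenceUniformity (x := f)
  simp only [dist_eq_norm] at h
  exact h

lemma iterate_differentiableOn {τ : CSpace n → CSpace n} (hτ : DifferentiableOn ℂ τ Ω)
    (hm : MapsTo τ Ω Ω) (j : ℕ) : DifferentiableOn ℂ (τ^[j]) Ω := by
  induction j with
  | zero => exact differentiableOn_id
  | succ j ih => exact ih.comp hτ hm

lemma iterate_leftInvOn {α : Type*} {s : Set α} {τ σ : α → α} (hm : MapsTo τ s s)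
    (h : ∀ x ∈ s, σ (τ x) = x) (j : ℕ) : ∀ x ∈ s, σ^[j] (τ^[j] x) = x := by
  induction j with
  | zero => exact fun _ _ => rfl
  | succ j ih =>
    intro x hx
    rw [Function.iterate_succ_apply, Function.iterate_succ_apply', h _ (hm.iterate j hx), ih x hx]

lemma exists_simultaneous_approximation (hΩ : IsOpen Ω) (hc : Convex ℝ Ω)
    {τ σ : CSpace n → CSpace n} (hτd : DifferentiableOn ℂ τ Ω) (hτ : MapsTo τ Ω Ω)
    (hσd : DifferentiableOn ℂ σ Ω) (hσ : MapsTo σ Ω Ω) (hστ : ∀ x ∈ Ω, σ (τ x) = x)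
    (hgen : IsGenTranslation Ω τ) {f g : CSpace n → ℂ} (hf : DifferentiableOn ℂ f Ω)
    (hg : DifferentiableOn ℂ g Ω) {K : Set (CSpace n)} (hK : IsCompact K) (hKΩ : K ⊆ Ω) {ε : ℝ}
    (hε : 0 < ε) : ∃ j : ℕ, 1 ≤ j ∧ ∃ q : CSpace n → ℂ, DifferentiableOn ℂ q Ω ∧
      (∀ x ∈ K, ‖q x - f x‖ < ε) ∧ ∀ x ∈ K, ‖q (τ^[j] x) - g x‖ < ε := by
  obtain ⟨T, hT, hTc, hKT, hTΩ⟩ := exists_compact_convex_between hΩ hc hK hKΩ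
  obtain ⟨j, hj, hdis, hH⟩ := hgen T hT hTΩ (OHull_eq_of_convex hT hTΩ hTc)
  have hτj := iterate_differentiableOn hτd hτ j
  have hL : IsCompact (τ^[j] '' T) := hT.image_of_continuousOn (hτj.continuousOn.mono hTΩ)
  have hLΩ : τ^[j] '' T ⊆ Ω := ((hτ.iterate j).mono_left hTΩ).image_subset
  have hgσ : DifferentiableOn ℂ (fun x => g (σ^[j] x)) Ω :=
    hg.comp (iterate_differentiableOn hσd hσ j) (hσ.iterate j)
  have hfg := hf.sub hgσ
  obtain ⟨M, hM⟩ := (hL.union hT).exists_bound_of_continuousOn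
    (hfg.continuousOn.mono (union_subset hLΩ hTΩ))
  have hM1 : 0 < |M| + 1 := by positivity
  obtain ⟨e, he, heL, heT⟩ := exists_holomorphic_separation hΩ hc hL hT
    (Set.disjoint_iff_inter_eq_empty.2 hdis) hLΩ hTΩ hH (div_pos hε hM1)
  have hbound : ∀ x ∈ τ^[j] '' T ∪ T, ∀ z : ℂ, ‖z‖ < ε / (|M| + 1) →
      ‖z * (f x - g (σ^[j] x))‖ < ε := fun x hx z hz => by
    rw [norm_mul]
    calc ‖z‖ * ‖f x - g (σ^[j] x)‖ ≤ ‖z‖ * (|M| + 1) := by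
          gcongr
          have := hM x hx
          simp only [Pi.sub_apply] at this
          linarith [le_abs_self M]
      _ < ε / (|M| + 1) * (|M| + 1) := by gcongr
      _ = ε := div_mul_cancel₀ _ hM1.ne'
  refine ⟨j, hj, fun x => e x * f x + (1 - e x) * g (σ^[j] x),
    (he.mul hf).add ((he.const_sub 1).mul hgσ), fun x hx => ?_, fun x hx => ?_⟩
  · convert hbound x (Or.inr (hKT hx)) _ (heT x (hKT hx)) using 2
    ring
  · have hx' : τ^[j] x ∈ τ^[j] '' T := mem_image_of_mem _ (hKT hx)
    convert hbound _ (Or.inl hx') _ (heL _ hx') using 2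
    simp only [iterate_leftInvOn hτ hστ j x (hKΩ hx)]
    ring

/-- A generalized translation admits a universal function, by a Baire category argument. -/
lemma exists_universal_of_isGenTranslation (hΩ : IsOpen Ω) (hc : Convex ℝ Ω)
    {τ σ : CSpace n → CSpace n} (hτd : DifferentiableOn ℂ τ Ω) (hτ : MapsTo τ Ω Ω)
    (hσd : DifferentiableOn ℂ σ Ω) (hσ : MapsTo σ Ω Ω) (hστ : ∀ x ∈ Ω, σ (τ x) = x)
    (hgen : IsGenTranslation Ω τ) :
    ∃ F : CSpace n → ℂ, DifferentiableOn ℂ F Ω ∧ OFun Ω ⊆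
      closure {g : C(↥Ω, ℂ) | ∃ j : ℕ, 1 ≤ j ∧ ∀ x : ↥Ω, g x = F (τ^[j] ↑x)} := by
  have := hΩ.isLocallyClosed.locallyCompactSpace
  have := (isClosed_OFun hΩ).completeSpace_coe
  have hτj := iterate_differentiableOn hτd hτ
  let T : ℕ → C(Ω, Ω) := fun j =>
    ⟨(hτ.iterate j).restrict, (hτj j).continuousOn.mapsToRestrict (hτ.iterate j)⟩
  let Φ : ℕ → OFun Ω → OFun Ω := fun j F => ⟨F.1.comp (T j), by
    obtain ⟨g, hg, hFg⟩ := F.2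
    exact ⟨g ∘ τ^[j], hg.comp (hτj j) (hτ.iterate j), fun x => hFg _⟩⟩
  have hΦ : ∀ j, Continuous (Φ j) := fun j =>
    ((ContinuousMap.continuous_precomp (T j)).comp continuous_subtype_val).subtype_mk _
  obtain ⟨b, hbc, hbne, hb⟩ := TopologicalSpace.exists_countable_basis (OFun Ω)
  have hdense : Dense (⋂ U ∈ b, ⋃ j ∈ Ici 1, Φ j ⁻¹' U) := by
    refine dense_biInter_of_isOpen (fun U hU => isOpen_biUnion fun j _ =>
      (hb.isOpen hU).preimage (hΦ j)) hbc fun U hU => ?_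
    rw [dense_iff_inter_open]
    rintro W hW ⟨f, hfW⟩
    obtain ⟨g, hgU⟩ : U.Nonempty := nonempty_iff_ne_empty.2 fun h => hbne (h ▸ hU)
    have hfN := hW.mem_nhds hfW
    have hgN := (hb.isOpen hU).mem_nhds hgU
    rw [nhds_subtype, mem_comap] at hfN hgN
    obtain ⟨W', hW', hWW'⟩ := hfN
    obtain ⟨U', hU', hUU'⟩ := hgN
    obtain ⟨⟨K₁, ε₁⟩, ⟨hK₁, hε₁⟩, h₁⟩ := (nhds_basis_compactConvergence f.1).mem_iff.1 hW'
    obtain ⟨⟨K₂, ε₂⟩, ⟨hK₂, hε₂⟩, h₂⟩ := (nhds_basis_compactConvergence g.1).mem_iff.1 hU'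
    obtain ⟨f', hf', hff'⟩ := f.2
    obtain ⟨g', hg', hgg'⟩ := g.2
    obtain ⟨j, hj, q, hq, hq₁, hq₂⟩ := exists_simultaneous_approximation hΩ hc hτd hτ hσd hσ hστ
      hgen hf' hg' ((hK₁.union hK₂).image continuous_subtype_val)
      (Subtype.coe_image_subset Ω (K₁ ∪ K₂)) (lt_min hε₁ hε₂)
    let Q : OFun Ω := ⟨⟨fun x => q x, hq.continuousOn.domRestrict⟩, q, hq, fun _ => rfl⟩
    refine ⟨Q, hWW' (h₁ fun x hx => ?_), mem_biUnion hj (hUU' (h₂ fun x hx => ?_))⟩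
    · rw [hff']
      exact (hq₁ x ⟨x, Or.inl hx, rfl⟩).trans_le (min_le_left _ _)
    · rw [hgg']
      exact (hq₂ x ⟨x, Or.inr hx, rfl⟩).trans_le (min_le_right _ _)
  have : Nonempty (OFun Ω) := ⟨⟨0, 0, differentiableOn_const 0, fun _ => rfl⟩⟩
  obtain ⟨F, hF⟩ := hdense.nonempty
  obtain ⟨F', hF', hFF'⟩ := F.2
  refine ⟨F', hF', fun g hg => mem_closure_iff.2 fun O hO hgO => ?_⟩
  obtain ⟨U, hU, -, hUO⟩ := hb.exists_subset_of_mem_open (a := ⟨g, hg⟩)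
    (u := Subtype.val ⁻¹' O) (mem_preimage.2 hgO) (hO.preimage continuous_subtype_val)
  obtain ⟨j, hj, hjU⟩ := mem_iUnion₂.1 (mem_iInter₂.1 hF U hU)
  exact ⟨(Φ j F).1, hUO hjU, j, hj, fun x => hFF' _⟩

lemma isGenTranslation_of_universal {τ σ : CSpace n → CSpace n} (hτd : DifferentiableOn ℂ τ Ω)
    (hτ : MapsTo τ Ω Ω) (hσd : DifferentiableOn ℂ σ Ω) (hσ : MapsTo σ Ω Ω)
    (hστ : ∀ x ∈ Ω, σ (τ x) = x) (hτσ : ∀ x ∈ Ω, τ (σ x) = x) {F : CSpace n → ℂ}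
    (hF : DifferentiableOn ℂ F Ω) (hdense : OFun Ω ⊆
      closure {g : C(↥Ω, ℂ) | ∃ j : ℕ, 1 ≤ j ∧ ∀ x : ↥Ω, g x = F (τ^[j] ↑x)}) :
    IsGenTranslation Ω τ := by
  intro K hK hKΩ hH
  obtain ⟨M', hM'⟩ := hK.exists_bound_of_continuousOn (hF.continuousOn.mono hKΩ)
  set M := |M'| + 1
  have hM : 0 < M := by positivity
  have hFM : ∀ x ∈ K, ‖F x‖ ≤ M := fun x hx => by linarith [hM' x hx, le_abs_self M']
  have hKc : IsCompact ((↑) ⁻¹' K : Set Ω) := by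
    rwa [Subtype.isCompact_iff, Subtype.image_preimage_coe, inter_eq_right.2 hKΩ]
  have hconst : ContinuousMap.const Ω (8 * M : ℂ) ∈ OFun Ω :=
    ⟨fun _ => 8 * M, differentiableOn_const _, fun _ => rfl⟩
  obtain ⟨g, ⟨j, hj, hg⟩, hgM⟩ := mem_closure_iff_nhds_basis
    (nhds_basis_compactConvergence _) |>.1 (hdense hconst) (_, M) ⟨hKc, hM⟩
  have hc : ‖(8 * M : ℂ)‖ = 8 * M := by
    rw [norm_mul, Complex.norm_real, Real.norm_of_nonneg hM.le]
    norm_num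
  have hc0 : (8 * M : ℂ) ≠ 0 := by
    rw [← norm_pos_iff, hc]
    positivity
  have hdiv : M / (8 * M) = 1 / 8 := by field_simp
  have hG : DifferentiableOn ℂ (fun x => F x / (8 * M)) Ω := by
    simpa only [div_eq_mul_inv] using hF.mul_const _
  have hGK : ∀ x ∈ K, ‖F x / (8 * M)‖ ≤ 1 / 8 := fun x hx => by
    rw [norm_div, hc, ← hdiv]
    gcongr
    exact hFM x hx
  have hGL : ∀ x ∈ τ^[j] '' K, ‖F x / (8 * M) - 1‖ ≤ 1 / 8 := by
    rintro _ ⟨x, hx, rfl⟩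
    rw [div_sub_one hc0, norm_div, hc, ← hdiv]
    gcongr
    rw [← hg ⟨x, hKΩ hx⟩]
    exact (hgM ⟨x, hKΩ hx⟩ hx).le
  have hτj := iterate_differentiableOn hτd hτ j
  refine ⟨j, hj, eq_empty_iff_forall_notMem.2 fun x hx => ?_, ?_⟩
  · have h1 := norm_sub_le (F x / (8 * M)) (F x / (8 * M) - 1)
    rw [sub_sub_cancel, norm_one] at h1
    linarith [hGK x hx.2, hGL x hx.1]
  · rw [union_comm]
    exact OHull_union_eq_of_separation hK hKΩ
      (hK.image_of_continuousOn (hτj.continuousOn.mono hKΩ))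
      ((hτ.iterate j).mono_left hKΩ).image_subset hH
      (OHull_image_eq (hτ.iterate j) (iterate_differentiableOn hσd hσ j) (hσ.iterate j)
        (iterate_leftInvOn hτ hστ j) (iterate_leftInvOn hσ hτσ j) hτj hK hKΩ hH)
      fun η hη => exists_separation_of_rough hG hGK hGL hη

end Universality

/-- For a convex domain `Ω ⊆ ℂⁿ` and an automorphism `τ` of `Ω`, there exists a
universal function `F ∈ 𝒪(Ω)` for `τ` iff `τ` is a generalized translation. -/
theorem stmt_13 {n : ℕ} (Ω : Set (CSpace n)) (hΩopen : IsOpen Ω) (hΩconv : Convex ℝ Ω)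
    (hΩne : Ω.Nonempty)
    (τ : CSpace n → CSpace n) (hτdiff : DifferentiableOn ℂ τ Ω) (hτmaps : Set.MapsTo τ Ω Ω)
    (hτbij : ∃ σ : CSpace n → CSpace n, DifferentiableOn ℂ σ Ω ∧ Set.MapsTo σ Ω Ω ∧
      (∀ x ∈ Ω, σ (τ x) = x) ∧ (∀ x ∈ Ω, τ (σ x) = x)) :
    (∃ F : CSpace n → ℂ, DifferentiableOn ℂ F Ω ∧
      {g : C(↥Ω, ℂ) | ∃ j : ℕ, 1 ≤ j ∧ ∀ x : ↥Ω, g x = F (τ^[j] ↑x)} ⊆ OFun Ω ∧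
      OFun Ω ⊆
        closure {g : C(↥Ω, ℂ) | ∃ j : ℕ, 1 ≤ j ∧ ∀ x : ↥Ω, g x = F (τ^[j] ↑x)}) ↔
    IsGenTranslation Ω τ := by
  obtain ⟨σ, hσd, hσ, hστ, hτσ⟩ := hτbij
  refine ⟨fun ⟨F, hF, _, hdense⟩ =>
    isGenTranslation_of_universal hτdiff hτmaps hσd hσ hστ hτσ hF hdense, fun hgen => ?_⟩
  obtain ⟨F, hF, hdense⟩ :=
    exists_universal_of_isGenTranslation hΩopen hΩconv hτdiff hτmaps hσd hσ hστ hgen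
  refine ⟨F, hF, ?_, hdense⟩
  rintro g ⟨j, -, hg⟩
  exact ⟨fun x => F (τ^[j] x),
    hF.comp (iterate_differentiableOn hτdiff hτmaps j) (hτmaps.iterate j), hg⟩
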